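/- arXiv:2204.02783 — 7 statements merged into one kernel-verified Lean document; each statement's English description precedes it below -/
import Mathlib

section
/- Let E, θ, η₀ > 0, ν ∈ (0,1), and t > (1−η₀)/θ. Let f : ℝ → ℝ be continuously differentiable on [(1−η₀)/θ, t]. Set s = (E/θ)·log(η₀+θt) and define g(s′) = f((exp(θ s′/E) − η₀)/θ). Then the Caputo fractional derivative of g of order ν at s equals the Hadamard-type operator applied to f at t: (1/Γ(1−ν)) · ∫₀ˢ (s−s′)^{−ν} · g′(s′) ds′ = Ô_ν f(t). That is, the operator Ô_ν is obtained from the Caputo derivative by the deterministic change of variable t ↦ (E/θ)·log(η₀+θt). -/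
open Real MeasureTheory Set

/-- The Hadamard-type operator `Ô_ν` is obtained from the Caputo fractional
derivative by the deterministic change of variable `t ↦ (E/θ)·log(η₀+θt)`. -/
theorem hadamard_eq_caputo_time_change (E θ η₀ ν t : ℝ) (f f' : ℝ → ℝ)
    (hE : 0 < E) (hθ : 0 < θ) (hη : 0 < η₀)
    (hν : ν ∈ Set.Ioo (0:ℝ) 1) (ht : (1 - η₀) / θ < t)
    (hf : ∀ τ ∈ Set.Icc ((1 - η₀) / θ) t, HasDerivAt f (f' τ) τ)
    (hf' : ContinuousOn f' (Set.Icc ((1 - η₀) / θ) t)) :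
    (1 / Real.Gamma (1 - ν)) *
      ∫ s' in (0:ℝ)..((E / θ) * Real.log (η₀ + θ * t)),
        ((E / θ) * Real.log (η₀ + θ * t) - s') ^ (-ν) *
          deriv (fun s'' : ℝ => f ((Real.exp (θ * s'' / E) - η₀) / θ)) s' =
    (1 / Real.Gamma (1 - ν)) * (E / θ) ^ (-ν) *
      ∫ τ in ((1 - η₀) / θ)..t,
        (Real.log ((η₀ + θ * t) / (η₀ + θ * τ))) ^ (-ν) * f' τ := by
  have hpos : 1 < η₀ + θ * t := by
    rw [div_lt_iff₀ hθ] at ht; linarith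
  have hlog : 0 < Real.log (η₀ + θ * t) := Real.log_pos hpos
  have hEθ : 0 < E / θ := div_pos hE hθ
  set S := (E / θ) * Real.log (η₀ + θ * t) with hS
  have hS0 : 0 ≤ S := (mul_pos hEθ hlog).le
  have hSE : θ * S / E = Real.log (η₀ + θ * t) := by
    rw [hS]; field_simp
  have hφ : ∀ x : ℝ, HasDerivAt (fun s : ℝ => (Real.exp (θ * s / E) - η₀) / θ)
      (Real.exp (θ * x / E) / E) x := by
    intro x
    have h1 : HasDerivAt (fun s : ℝ => θ * s / E) (θ * 1 / E) x :=
      ((hasDerivAt_id x).const_mul θ).div_const E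
    have h2 := (h1.exp.sub_const η₀).div_const θ
    have h3 : Real.exp (θ * x / E) / E = Real.exp (θ * x / E) * (θ * 1 / E) / θ := by field_simp
    rw [h3]; exact h2
  have hcv := intervalIntegral.integral_comp_mul_deriv_of_deriv_nonneg (a := 0) (b := S)
    (f := fun s : ℝ => (Real.exp (θ * s / E) - η₀) / θ)
    (f' := fun x => Real.exp (θ * x / E) / E)
    (g := fun τ => (E / θ) ^ (-ν) *
      ((Real.log ((η₀ + θ * t) / (η₀ + θ * τ))) ^ (-ν) * f' τ))
    (fun x _ => (hφ x).continuousAt.continuousWithinAt)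
    (fun x _ => hφ x) (fun x _ => by positivity)
  have e0 : (Real.exp (θ * 0 / E) - η₀) / θ = (1 - η₀) / θ := by simp
  have e1 : (Real.exp (θ * S / E) - η₀) / θ = t := by
    rw [hSE, Real.exp_log (by linarith)]; field_simp; ring
  simp only [e0, e1] at hcv
  rw [intervalIntegral.integral_const_mul] at hcv
  rw [mul_assoc, ← hcv]
  congr 1
  apply intervalIntegral.integral_congr
  intro x hx
  rw [uIcc_of_le hS0] at hx
  have hmem : (Real.exp (θ * x / E) - η₀) / θ ∈ Set.Icc ((1 - η₀) / θ) t := by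
    constructor
    · rw [← e0]; have := hx.1; gcongr
    · rw [← e1]; have := hx.2; gcongr
  have hd := ((hf _ hmem).comp x (hφ x)).deriv
  simp only [Function.comp_def] at hd ⊢
  rw [hd]
  have e2 : η₀ + θ * ((Real.exp (θ * x / E) - η₀) / θ) = Real.exp (θ * x / E) := by
    field_simp; ring
  rw [e2, Real.log_div (by linarith) (Real.exp_ne_zero _), Real.log_exp, ← hSE]
  have e3 : S - x = (E / θ) * (θ * S / E - θ * x / E) := by field_simp
  have h4 : 0 ≤ θ * S / E - θ * x / E := by
    have := hx.2
    rw [sub_nonneg]; gcongr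
  rw [e3, Real.mul_rpow hEθ.le h4]
  ring
end

section
/- Let E, θ, η₀ > 0, ν ∈ (0,1), and define f(t) = E_ν(−(E/θ)^ν · (log(η₀+θt))^ν) = ∑_{k=0}^∞ (−(E/θ)^ν (log(η₀+θt))^ν)^k / Γ(νk+1). Then f is an eigenfunction of the Hadamard-type fractional operator with eigenvalue −1: for every t > (1−η₀)/θ, Ô_ν f(t) = −f(t), i.e. (1/Γ(1−ν)) · (E/θ)^{−ν} · ∫_{(1−η₀)/θ}^{t} (log((η₀+θt)/(η₀+θτ)))^{−ν} · f′(τ) dτ = −f(t). -/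
open Real MeasureTheory Set

/-- The Mittag-Leffler function `E_ν(x) = ∑_{k=0}^∞ x^k / Γ(νk+1)`. -/
noncomputable def mittagLeffler (ν x : ℝ) : ℝ :=
  ∑' k : ℕ, x ^ k / Real.Gamma (ν * k + 1)

lemma ml_gamma_lower {M a : ℝ} (hM : 0 < M) (ha : 0 ≤ a) :
    M ^ a * Real.exp (-M) ≤ Real.Gamma (a + 1) := by
  have hint := Real.GammaIntegral_convergent (s := a + 1) (by linarith)
  rw [Real.Gamma_eq_integral (by linarith), ← integral_exp_neg_Ioi M, ← integral_const_mul]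
  have hsub : Ioi M ⊆ Ioi (0:ℝ) := Ioi_subset_Ioi hM.le
  calc ∫ x in Ioi M, M ^ a * Real.exp (-x)
      ≤ ∫ x in Ioi M, Real.exp (-x) * x ^ (a + 1 - 1) := by
        apply setIntegral_mono_on ((integrableOn_exp_neg_Ioi M).const_mul _)
          (hint.mono_set hsub) measurableSet_Ioi
        intro x hx
        rw [mul_comm, add_sub_cancel_right]
        have : M ^ a ≤ x ^ a := Real.rpow_le_rpow hM.le (le_of_lt hx) ha
        gcongr
    _ ≤ _ := by
        apply setIntegral_mono_set hint _ hsub.eventuallyLE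
        filter_upwards [self_mem_ae_restrict measurableSet_Ioi] with x hx
        have : (0:ℝ) < x := hx
        simp only [Pi.zero_apply]
        positivity

lemma ml_gamma_pos {ν : ℝ} (hν : 0 < ν) (k : ℕ) : 0 < Real.Gamma (ν * k + 1) :=
  Real.Gamma_pos_of_pos (by positivity)

lemma ml_summable {ν : ℝ} (hν : 0 < ν) (x : ℝ) :
    Summable (fun k : ℕ => x ^ k / Real.Gamma (ν * k + 1)) := by
  set R : ℝ := |x| + 1 with hR
  have hR0 : 0 < R := by positivity
  set M : ℝ := (2 * R) ^ (1 / ν) with hM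
  have hM0 : 0 < M := by positivity
  have hMν : M ^ ν = 2 * R := by
    rw [hM, ← Real.rpow_mul (by positivity), one_div, inv_mul_cancel₀ hν.ne', Real.rpow_one]
  have hs : Summable (fun k : ℕ => Real.exp M * (1 / 2 : ℝ) ^ k) :=
    (summable_geometric_of_lt_one (by norm_num) (by norm_num)).mul_left _
  refine Summable.of_norm_bounded hs fun k => ?_
  have hg := ml_gamma_lower hM0 (a := ν * k) (by positivity)
  rw [Real.rpow_mul hM0.le, hMν, Real.rpow_natCast] at hg
  have hgp := ml_gamma_pos hν k
  rw [norm_div, norm_pow, Real.norm_eq_abs, Real.norm_of_nonneg hgp.le, div_le_iff₀ hgp]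
  calc |x| ^ k ≤ R ^ k := by gcongr; linarith
    _ = Real.exp M * (1 / 2) ^ k * ((2 * R) ^ k * Real.exp (-M)) := by
        rw [Real.exp_neg, mul_pow, one_div, inv_pow]
        field_simp
    _ ≤ _ := by gcongr

lemma ml_hasDerivAt {ν : ℝ} (hν : 0 < ν) (x : ℝ) :
    HasDerivAt (mittagLeffler ν)
      (∑' k : ℕ, ((k:ℝ) + 1) * x ^ k / Real.Gamma (ν * (k + 1 : ℕ) + 1)) x := by
  set R : ℝ := |x| + 1 with hR
  have hR0 : 1 ≤ R := by have := abs_nonneg x; linarith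
  have hu := ml_summable hν (2 * R)
  have hbd : ∀ (k : ℕ), ∀ y ∈ Metric.ball (0:ℝ) R,
      ‖(k:ℝ) * y ^ (k - 1) / Real.Gamma (ν * k + 1)‖ ≤ (2 * R) ^ k / Real.Gamma (ν * k + 1) := by
    intro k y hy
    have hy' : |y| ≤ R := by simpa using (mem_ball_zero_iff.1 hy).le
    have hgp := ml_gamma_pos hν k
    rw [norm_div, norm_mul, norm_pow, Real.norm_eq_abs y, Real.norm_of_nonneg hgp.le,
      Real.norm_of_nonneg (Nat.cast_nonneg k)]
    gcongr
    rw [mul_pow]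
    have h1 : (k:ℝ) ≤ 2 ^ k := by exact_mod_cast Nat.lt_two_pow_self.le
    have h2 : |y| ^ (k - 1) ≤ R ^ k :=
      (pow_le_pow_left₀ (abs_nonneg y) hy' _).trans (pow_le_pow_right₀ hR0 (Nat.sub_le _ _))
    gcongr
  have hx : x ∈ Metric.ball (0:ℝ) R := by
    rw [mem_ball_zero_iff, Real.norm_eq_abs]; linarith
  have h := hasDerivAt_tsum_of_isPreconnected
    (g := fun (k : ℕ) (y : ℝ) => y ^ k / Real.Gamma (ν * k + 1))
    (g' := fun (k : ℕ) (y : ℝ) => (k:ℝ) * y ^ (k - 1) / Real.Gamma (ν * k + 1))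
    hu Metric.isOpen_ball (convex_ball (0:ℝ) R).isPreconnected
    (fun k y _ => (hasDerivAt_pow k y).div_const _) hbd hx (ml_summable hν x) hx
  have hsum : Summable fun k : ℕ => (k:ℝ) * x ^ (k - 1) / Real.Gamma (ν * k + 1) :=
    Summable.of_norm_bounded hu fun k => hbd k x hx
  rw [hsum.tsum_eq_zero_add] at h
  simp only [Nat.cast_zero, zero_mul, zero_div, zero_add, Nat.add_sub_cancel] at h
  push_cast at h ⊢
  exact h

lemma ml_beta {s v x : ℝ} (hs : 0 < s) (hv : 0 < v) (hx : 0 < x) :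
    ∫ u in Ioo 0 x, u ^ (s - 1) * (x - u) ^ (v - 1) =
      x ^ (s + v - 1) * (Real.Gamma s * Real.Gamma v / Real.Gamma (s + v)) := by
  rw [← integral_Ioc_eq_integral_Ioo, ← intervalIntegral.integral_of_le hx.le]
  have h := Complex.betaIntegral_scaled s v hx
  have hb := Complex.Gamma_mul_Gamma_eq_betaIntegral (s := s) (t := v) (by simpa) (by simpa)
  have hg : Real.Gamma (s + v) ≠ 0 := (Real.Gamma_pos_of_pos (by linarith)).ne'
  have hb' : Complex.betaIntegral s v =
      ((Real.Gamma s * Real.Gamma v / Real.Gamma (s + v) : ℝ) : ℂ) := by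
    rw [← Complex.ofReal_add] at hb
    simp only [Complex.Gamma_ofReal] at hb
    have : ((Real.Gamma (s + v) : ℝ) : ℂ) ≠ 0 := by exact_mod_cast hg
    push_cast
    field_simp
    rw [hb, mul_comm]
  apply Complex.ofReal_injective
  rw [← intervalIntegral.integral_ofReal, Complex.ofReal_mul, ← hb',
    Complex.ofReal_cpow hx.le]
  push_cast
  rw [← h, intervalIntegral.integral_of_le hx.le, intervalIntegral.integral_of_le hx.le]
  refine setIntegral_congr_fun measurableSet_Ioc fun u hu => ?_
  rw [Complex.ofReal_cpow hu.1.le, Complex.ofReal_cpow (by linarith [hu.2])]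
  push_cast
  rfl

lemma ml_g_deriv {ν c u : ℝ} (hν : 0 < ν) (hu : 0 < u) :
    HasDerivAt (fun u : ℝ => mittagLeffler ν (-(c * u ^ ν)))
      (∑' k : ℕ, (-c) ^ (k + 1) / Real.Gamma (ν * (k + 1)) * u ^ (ν * (k + 1) - 1)) u := by
  have h1 : HasDerivAt (fun u : ℝ => -(c * u ^ ν)) (-(c * (ν * u ^ (ν - 1)))) u :=
    ((Real.hasDerivAt_rpow_const (Or.inl hu.ne')).const_mul c).neg
  have h2 := (ml_hasDerivAt hν (-(c * u ^ ν))).comp u h1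
  rw [← tsum_mul_right] at h2
  refine h2.congr_deriv (tsum_congr fun k => ?_)
  have hk : (0:ℝ) < ν * (k + 1) := by positivity
  have hg := (Real.Gamma_pos_of_pos hk).ne'
  push_cast
  rw [Real.Gamma_add_one hk.ne']
  have e : u ^ (ν * (k + 1) - 1) = (u ^ ν) ^ k * u ^ (ν - 1) := by
    rw [← Real.rpow_natCast, ← Real.rpow_mul hu.le, ← Real.rpow_add hu]
    congr 1; ring
  rw [e]
  have : (-(c * u ^ ν)) ^ k = (-c) ^ k * (u ^ ν) ^ k := by rw [← mul_pow]; congr 1; ring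
  rw [this]
  field_simp
  ring

lemma ml_main {ν c x : ℝ} (hν : 0 < ν) (hν1 : ν < 1) (hc : 0 < c) (hx : 0 < x) :
    ∫ u in Ioo 0 x, (x - u) ^ (-ν) *
      (∑' k : ℕ, (-c) ^ (k + 1) / Real.Gamma (ν * (k + 1)) * u ^ (ν * (k + 1) - 1)) =
      -(c * Real.Gamma (1 - ν) * mittagLeffler ν (-(c * x ^ ν))) := by
  have hb : ∀ k : ℕ, ∫ u in Ioo 0 x, u ^ (ν * (k + 1) - 1) * (x - u) ^ (-ν) =
      (x ^ ν) ^ k * (Real.Gamma (ν * (k + 1)) * Real.Gamma (1 - ν) / Real.Gamma (ν * k + 1)) := by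
    intro k
    have := ml_beta (s := ν * (k + 1)) (v := 1 - ν) (by positivity) (by linarith) hx
    rw [show 1 - ν - 1 = -ν by ring, show ν * ((k:ℝ) + 1) + (1 - ν) - 1 = ν * k by ring,
      show ν * ((k:ℝ) + 1) + (1 - ν) = ν * k + 1 by ring, Real.rpow_mul hx.le,
      Real.rpow_natCast] at this
    exact this
  have hg1 : 0 < Real.Gamma (1 - ν) := Real.Gamma_pos_of_pos (by linarith)
  have hgs : ∀ k : ℕ, 0 < Real.Gamma (ν * (k + 1)) := fun k =>
    Real.Gamma_pos_of_pos (by positivity)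
  have hi : ∀ k : ℕ, Integrable (fun u : ℝ => u ^ (ν * (k + 1) - 1) * (x - u) ^ (-ν))
      (volume.restrict (Ioo 0 x)) := by
    intro k
    apply Integrable.of_integral_ne_zero
    rw [hb k]
    have := hgs k
    have := ml_gamma_pos hν k
    positivity
  set F : ℕ → ℝ → ℝ := fun k u => (-c) ^ (k + 1) / Real.Gamma (ν * (k + 1)) *
    (u ^ (ν * (k + 1) - 1) * (x - u) ^ (-ν)) with hF
  have hFi : ∀ k, Integrable (F k) (volume.restrict (Ioo 0 x)) := fun k => (hi k).const_mul _
  have hn : ∀ k : ℕ, ∫ u in Ioo 0 x, ‖F k u‖ =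
      c * Real.Gamma (1 - ν) * ((c * x ^ ν) ^ k / Real.Gamma (ν * k + 1)) := by
    intro k
    have : ∫ u in Ioo 0 x, ‖F k u‖ = ∫ u in Ioo 0 x, c ^ (k + 1) / Real.Gamma (ν * (k + 1)) *
        (u ^ (ν * (k + 1) - 1) * (x - u) ^ (-ν)) := by
      refine setIntegral_congr_fun measurableSet_Ioo fun u hu => ?_
      have h1 : 0 < u := hu.1
      have h2 : 0 < x - u := sub_pos.2 hu.2
      simp only [hF]
      rw [norm_mul, norm_div, norm_pow, norm_neg, Real.norm_of_nonneg hc.le,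
        Real.norm_of_nonneg (hgs k).le, Real.norm_of_nonneg (by positivity)]
    rw [this, integral_const_mul, hb k, mul_pow]
    have := (hgs k).ne'
    have := (ml_gamma_pos hν k).ne'
    field_simp
    try ring
  have hsum : Summable fun k => ∫ u in Ioo 0 x, ‖F k u‖ := by
    simp_rw [hn]
    exact (ml_summable hν _).mul_left _
  have key := integral_tsum_of_summable_integral_norm hFi hsum
  have e1 : ∀ u : ℝ, (x - u) ^ (-ν) *
      (∑' k : ℕ, (-c) ^ (k + 1) / Real.Gamma (ν * (k + 1)) * u ^ (ν * (k + 1) - 1)) =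
      ∑' k, F k u := by
    intro u
    rw [← tsum_mul_left]
    exact tsum_congr fun k => by simp only [hF]; ring
  simp_rw [e1]
  rw [← key, mittagLeffler, ← tsum_mul_left, ← tsum_neg]
  refine tsum_congr fun k => ?_
  simp only [hF]
  rw [integral_const_mul, hb k, show -(c * x ^ ν) = -c * x ^ ν by ring, mul_pow]
  have := (hgs k).ne'
  have := (ml_gamma_pos hν k).ne'
  field_simp
  ring

/-- `f(t) = E_ν(−(E/θ)^ν (log(η₀+θt))^ν)` is an eigenfunction of the
Hadamard-type fractional operator with eigenvalue `−1`. -/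
theorem mittagLeffler_eigenfunction (E θ η₀ ν : ℝ)
    (hE : 0 < E) (hθ : 0 < θ) (hη : 0 < η₀) (hν : ν ∈ Set.Ioo (0:ℝ) 1)
    (f : ℝ → ℝ)
    (hf : f = fun t : ℝ =>
      mittagLeffler ν (-((E / θ) ^ ν * (Real.log (η₀ + θ * t)) ^ ν))) :
    ∀ t : ℝ, (1 - η₀) / θ < t →
      (1 / Real.Gamma (1 - ν)) * (E / θ) ^ (-ν) *
        ∫ τ in ((1 - η₀) / θ)..t,
          (Real.log ((η₀ + θ * t) / (η₀ + θ * τ))) ^ (-ν) * deriv f τ = -f t := by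
  intro t ht
  have hν0 := hν.1
  have hlam : 0 < E / θ := by positivity
  have hc : 0 < (E / θ) ^ ν := by positivity
  have ht1 : 1 < η₀ + θ * t := by
    rw [div_lt_iff₀ hθ] at ht; linarith
  set x := Real.log (η₀ + θ * t) with hx
  have hx0 : 0 < x := Real.log_pos ht1
  have hex : Real.exp x = η₀ + θ * t := Real.exp_log (by linarith)
  set φ : ℝ → ℝ := fun u => (Real.exp u - η₀) / θ with hφ
  have hφe : ∀ u, η₀ + θ * φ u = Real.exp u := fun u => by simp only [hφ]; field_simp; ring
  have himg : φ '' Ioo 0 x = Ioo ((1 - η₀) / θ) t := by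
    ext y
    constructor
    · rintro ⟨u, hu, rfl⟩
      have h1 : 1 < Real.exp u := Real.one_lt_exp_iff.2 hu.1
      have h2 : Real.exp u < Real.exp x := Real.exp_lt_exp.2 hu.2
      refine ⟨?_, ?_⟩
      · simp only [hφ]; gcongr
      · simp only [hφ]; rw [div_lt_iff₀ hθ]; linarith
    · rintro ⟨h1, h2⟩
      rw [div_lt_iff₀ hθ] at h1
      have h3 : 1 < η₀ + θ * y := by linarith
      refine ⟨Real.log (η₀ + θ * y), ⟨Real.log_pos h3, ?_⟩, ?_⟩
      · apply Real.log_lt_log (by linarith); gcongr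
      · simp only [hφ]; rw [Real.exp_log (by linarith)]; field_simp; ring
  have hder : ∀ u ∈ Ioo 0 x, HasDerivWithinAt φ (Real.exp u / θ) (Ioo 0 x) u := fun u _ =>
    (((Real.hasDerivAt_exp u).sub_const η₀).div_const θ).hasDerivWithinAt
  have hinj : InjOn φ (Ioo 0 x) := by
    intro a _ b _ hab
    have : Real.exp a = Real.exp b := by rw [← hφe a, ← hφe b, hab]
    exact Real.exp_injective this
  have hft : f t = mittagLeffler ν (-((E / θ) ^ ν * x ^ ν)) := by rw [hf]
  rw [intervalIntegral.integral_of_le ht.le, integral_Ioc_eq_integral_Ioo, ← himg,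
    integral_image_eq_integral_abs_deriv_smul measurableSet_Ioo hder hinj]
  have hcongr : ∀ u ∈ Ioo 0 x, |Real.exp u / θ| •
      ((Real.log ((η₀ + θ * t) / (η₀ + θ * φ u))) ^ (-ν) * deriv f (φ u)) =
      (x - u) ^ (-ν) * (∑' k : ℕ, (-((E / θ) ^ ν)) ^ (k + 1) / Real.Gamma (ν * (k + 1)) *
        u ^ (ν * (k + 1) - 1)) := by
    intro u hu
    have hd1 : HasDerivAt (fun τ : ℝ => Real.log (η₀ + θ * τ)) (θ / Real.exp u) (φ u) := by
      have := (((hasDerivAt_id (φ u)).const_mul θ).const_add η₀).log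
        (by simp only [id]; rw [hφe]; exact (Real.exp_pos u).ne')
      simp only [id, hφe, mul_one] at this
      exact this
    have hl : Real.log (η₀ + θ * φ u) = u := by rw [hφe, Real.log_exp]
    have hd2 := HasDerivAt.comp_of_eq (φ u) (ml_g_deriv (c := (E / θ) ^ ν) hν0 hu.1) hd1 hl.symm
    have hfc : f = ((fun u : ℝ => mittagLeffler ν (-((E / θ) ^ ν * u ^ ν))) ∘
        fun τ : ℝ => Real.log (η₀ + θ * τ)) := hf
    rw [← hfc] at hd2
    have hd3 := hd2.deriv
    rw [hd3, hφe, ← hex, ← Real.exp_sub, Real.log_exp, smul_eq_mul,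
      abs_of_pos (by positivity)]
    have := (Real.exp_pos u).ne'
    field_simp
  rw [setIntegral_congr_fun measurableSet_Ioo hcongr, ml_main hν0 hν.2 hc hx0, hft,
    Real.rpow_neg hlam.le]
  have := (Real.Gamma_pos_of_pos (show 0 < 1 - ν by linarith [hν.2])).ne'
  field_simp
end

section
/- Let ν ∈ (0,1) and define the relaxation response σ(t) = E_ν(−(log(1+t))^ν) = ∑_{k=0}^∞ (−(log(1+t))^ν)^k / Γ(νk+1). Then σ solves the fractional relaxation equation of the modified Maxwell model with E = θ = η₀ = 1: for every t > 0, (1/Γ(1−ν)) · ∫₀ᵗ (log((1+t)/(1+τ)))^{−ν} · σ′(τ) dτ = −σ(t). -/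
open Real MeasureTheory Set

theorem aux_gamma_lower {R s : ℝ} (hR : 0 < R) (hs : 0 ≤ s) :
    R ^ s * Real.exp (-R) ≤ Real.Gamma (s + 1) := by
  have hint := Real.GammaIntegral_convergent (s := s + 1) (by linarith)
  rw [Real.Gamma_eq_integral (by linarith), ← integral_exp_neg_Ioi R, ← integral_const_mul]
  calc ∫ x in Ioi R, R ^ s * Real.exp (-x)
      ≤ ∫ x in Ioi R, Real.exp (-x) * x ^ (s + 1 - 1) := by
        refine setIntegral_mono_on ?_ (hint.mono_set (Ioi_subset_Ioi hR.le)) measurableSet_Ioi ?_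
        · exact (integrableOn_exp_neg_Ioi R).const_mul _
        · intro x hx
          rw [mul_comm, add_sub_cancel_right]
          gcongr
          exact (mem_Ioi.1 hx).le
    _ ≤ _ := by
        refine setIntegral_mono_set hint ?_ (Ioi_subset_Ioi hR.le).eventuallyLE
        refine (ae_restrict_mem measurableSet_Ioi).mono fun x hx => ?_
        have : 0 < x := hx
        simp only [Pi.zero_apply]
        positivity

theorem aux_summable {ν : ℝ} (hν : 0 < ν) {x : ℝ} (hx : 0 ≤ x) :
    Summable fun k : ℕ => x ^ k / Real.Gamma (ν * k + 1) := by
  set R : ℝ := (2 * x + 1) ^ (1 / ν) with hRdef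
  have hR : 0 < R := by positivity
  have hRν : R ^ ν = 2 * x + 1 := by
    rw [hRdef, ← Real.rpow_mul (by positivity), one_div_mul_cancel hν.ne', Real.rpow_one]
  have hr : x / (2 * x + 1) < 1 := by
    rw [div_lt_one (by positivity)]; linarith
  have hg := (summable_geometric_of_lt_one (by positivity) hr).mul_left (Real.exp R)
  refine Summable.of_nonneg_of_le (fun k => ?_) (fun k => ?_) hg
  · have : 0 < Real.Gamma (ν * k + 1) := Real.Gamma_pos_of_pos (by positivity)
    positivity
  · have h1 := aux_gamma_lower hR (s := ν * k) (by positivity)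
    rw [Real.rpow_mul hR.le, hRν, Real.rpow_natCast] at h1
    calc x ^ k / Real.Gamma (ν * k + 1)
        ≤ x ^ k / ((2 * x + 1) ^ k * Real.exp (-R)) := by gcongr
      _ = _ := by
        rw [Real.exp_neg, div_pow]
        field_simp

theorem aux_summable' {ν : ℝ} (hν : 0 < ν) (x : ℝ) :
    Summable fun k : ℕ => x ^ k / Real.Gamma (ν * k + 1) := by
  refine Summable.of_norm_bounded (aux_summable hν (abs_nonneg x)) fun k => ?_
  have : 0 < Real.Gamma (ν * k + 1) := Real.Gamma_pos_of_pos (by positivity)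
  rw [norm_div, norm_pow, Real.norm_eq_abs, Real.norm_eq_abs, abs_of_pos this]

theorem aux_bound {ν : ℝ} (hν : 0 < ν) {r y : ℝ} (hr : 1 ≤ r) (hy : |y| ≤ r) (k : ℕ) :
    ‖(k : ℝ) * y ^ (k - 1) / Real.Gamma (ν * k + 1)‖ ≤ (2 * r) ^ k / Real.Gamma (ν * k + 1) := by
  have hG : 0 < Real.Gamma (ν * k + 1) := Real.Gamma_pos_of_pos (by positivity)
  rw [norm_div, norm_mul, norm_pow, Real.norm_eq_abs, Real.norm_eq_abs, Real.norm_eq_abs,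
    abs_of_pos hG, mul_pow, Nat.abs_cast]
  have h1 : (k : ℝ) ≤ 2 ^ k := by exact_mod_cast Nat.lt_two_pow_self.le
  have h2 : |y| ^ (k - 1) ≤ r ^ k :=
    (pow_le_pow_left₀ (abs_nonneg y) hy _).trans (pow_le_pow_right₀ hr (Nat.sub_le k 1))
  gcongr

theorem aux_deriv {ν : ℝ} (hν : 0 < ν) (x : ℝ) :
    HasDerivAt (mittagLeffler ν)
      (∑' j : ℕ, ((j : ℝ) + 1) * x ^ j / Real.Gamma (ν * (j + 1) + 1)) x := by
  set r : ℝ := |x| + 1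
  have hr : 1 ≤ r := by have := abs_nonneg x; simp only [r]; linarith
  have hx : x ∈ Metric.ball (0:ℝ) r := by simp [r]
  have hu := aux_summable' hν (2 * r)
  have key := hasDerivAt_tsum_of_isPreconnected (𝕜 := ℝ)
    (g := fun (k : ℕ) (y : ℝ) => y ^ k / Real.Gamma (ν * k + 1))
    (g' := fun (k : ℕ) (y : ℝ) => (k : ℝ) * y ^ (k - 1) / Real.Gamma (ν * k + 1))
    hu Metric.isOpen_ball (convex_ball (0:ℝ) r).isPreconnected
    (fun k y _ => (hasDerivAt_pow k y).div_const _)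
    (fun k y hy => aux_bound hν hr (by simpa using (mem_ball_zero_iff.1 hy).le) k)
    hx (aux_summable' hν x) hx
  have hs : Summable fun k : ℕ => (k : ℝ) * x ^ (k - 1) / Real.Gamma (ν * k + 1) :=
    Summable.of_norm_bounded hu (aux_bound hν hr (by simp [r]))
  rw [hs.tsum_eq_zero_add] at key
  have hfun : mittagLeffler ν = fun z => ∑' k : ℕ, z ^ k / Real.Gamma (ν * k + 1) := rfl
  rw [hfun]
  simpa using key

theorem aux_beta {p q T : ℝ} (hp : 0 < p) (hq : 0 < q) (hT : 0 < T) :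
    ∫ u in Ioo 0 T, u ^ (p - 1) * (T - u) ^ (q - 1)
      = T ^ (p + q - 1) * (Real.Gamma p * Real.Gamma q / Real.Gamma (p + q)) := by
  have h1 := Complex.betaIntegral_scaled p q hT
  have h2 := Complex.Gamma_mul_Gamma_eq_betaIntegral (s := p) (t := q) (by simpa) (by simpa)
  have hG : Real.Gamma (p + q) ≠ 0 := (Real.Gamma_pos_of_pos (by positivity)).ne'
  have h3 : Complex.betaIntegral p q
      = ((Real.Gamma p * Real.Gamma q / Real.Gamma (p + q) : ℝ) : ℂ) := by
    rw [← Complex.ofReal_add, Complex.Gamma_ofReal, Complex.Gamma_ofReal,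
      Complex.Gamma_ofReal] at h2
    have : (Real.Gamma (p + q) : ℂ) ≠ 0 := by exact_mod_cast hG
    push_cast
    rw [eq_div_iff this, h2, mul_comm]
  rw [h3, intervalIntegral.integral_of_le hT.le, integral_Ioc_eq_integral_Ioo] at h1
  have h4 : ∫ x in Ioo 0 T, (x : ℂ) ^ ((p : ℂ) - 1) * ((T : ℂ) - x) ^ ((q : ℂ) - 1)
      = ∫ x in Ioo 0 T, ((x ^ (p - 1) * (T - x) ^ (q - 1) : ℝ) : ℂ) := by
    refine setIntegral_congr_fun measurableSet_Ioo fun x hx => ?_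
    rw [Complex.ofReal_mul, Complex.ofReal_cpow hx.1.le,
      Complex.ofReal_cpow (sub_nonneg.2 hx.2.le)]
    push_cast
    rfl
  rw [h4, integral_complex_ofReal] at h1
  have h5 : (T : ℂ) ^ ((p : ℂ) + q - 1) = ((T ^ (p + q - 1) : ℝ) : ℂ) := by
    rw [Complex.ofReal_cpow hT.le]; push_cast; rfl
  rw [h5] at h1
  exact_mod_cast h1

theorem aux_beta_integrable {p q T : ℝ} (hp : 0 < p) (hq : 0 < q) (hT : 0 < T) :
    IntegrableOn (fun u => u ^ (p - 1) * (T - u) ^ (q - 1)) (Ioo 0 T) := by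
  by_contra h
  have h1 := aux_beta hp hq hT
  rw [integral_undef h] at h1
  have := Real.Gamma_pos_of_pos hp
  have := Real.Gamma_pos_of_pos hq
  have := Real.Gamma_pos_of_pos (add_pos hp hq)
  have : 0 < T ^ (p + q - 1) * (Real.Gamma p * Real.Gamma q / Real.Gamma (p + q)) := by
    positivity
  linarith

theorem aux_main {ν T : ℝ} (h0 : 0 < ν) (h1 : ν < 1) (hT : 0 < T) :
    ∫ u in Ioo 0 T, (∑' j : ℕ, (-1) ^ (j + 1) / Real.Gamma (ν * (j + 1)) *
        (u ^ (ν * (j + 1) - 1) * (T - u) ^ ((1 - ν) - 1)))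
      = - Real.Gamma (1 - ν) * mittagLeffler ν (-T ^ ν) := by
  have hG : ∀ j : ℕ, 0 < Real.Gamma (ν * (j + 1)) := fun j =>
    Real.Gamma_pos_of_pos (by positivity)
  have hval : ∀ j : ℕ, ∫ u in Ioo 0 T, u ^ (ν * (j + 1) - 1) * (T - u) ^ ((1 - ν) - 1)
      = Real.Gamma (ν * (j + 1)) * (Real.Gamma (1 - ν) *
        ((T ^ ν) ^ j / Real.Gamma (ν * j + 1))) := fun j => by
    rw [aux_beta (by positivity) (by linarith) hT]
    rw [show ν * ((j : ℝ) + 1) + (1 - ν) = ν * j + 1 by ring, add_sub_cancel_right,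
      Real.rpow_mul hT.le, Real.rpow_natCast]
    ring
  have hs := hasSum_integral_of_summable_integral_norm (μ := volume.restrict (Ioo 0 T))
    (F := fun (j : ℕ) (u : ℝ) => (-1) ^ (j + 1) / Real.Gamma (ν * (j + 1)) *
        (u ^ (ν * (j + 1) - 1) * (T - u) ^ ((1 - ν) - 1)))
    (fun j => (aux_beta_integrable (by positivity) (by linarith) hT).const_mul _) ?_
  · rw [← hs.tsum_eq, mittagLeffler, ← tsum_mul_left]
    refine tsum_congr fun j => ?_
    rw [integral_const_mul, hval, neg_pow (T ^ ν), pow_succ]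
    have := (hG j).ne'
    field_simp
  · have hsum := (aux_summable' h0 (T ^ ν)).mul_left (Real.Gamma (1 - ν))
    refine hsum.congr fun j => ?_
    have : ∫ u in Ioo 0 T, ‖(-1) ^ (j + 1) / Real.Gamma (ν * (j + 1)) *
        (u ^ (ν * (j + 1) - 1) * (T - u) ^ ((1 - ν) - 1))‖
        = ∫ u in Ioo 0 T, 1 / Real.Gamma (ν * (j + 1)) *
        (u ^ (ν * (j + 1) - 1) * (T - u) ^ ((1 - ν) - 1)) := by
      refine setIntegral_congr_fun measurableSet_Ioo fun u hu => ?_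
      have hu1 : 0 ≤ u ^ (ν * (j + 1) - 1) := Real.rpow_nonneg hu.1.le _
      have hu2 : 0 ≤ (T - u) ^ ((1 - ν) - 1) := Real.rpow_nonneg (sub_nonneg.2 hu.2.le) _
      rw [norm_mul, norm_div, norm_pow, norm_neg, norm_one, one_pow, Real.norm_of_nonneg (hG j).le,
        Real.norm_of_nonneg (mul_nonneg hu1 hu2)]
    rw [this, integral_const_mul, hval]
    have := (hG j).ne'
    field_simp

theorem aux_sigma_deriv {ν : ℝ} (h0 : 0 < ν) {τ : ℝ} (hτ : 0 < τ) :
    deriv (fun t : ℝ => mittagLeffler ν (-(Real.log (1 + t)) ^ ν)) τ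
      = 1 / (1 + τ) * ∑' j : ℕ, (-1) ^ (j + 1) / Real.Gamma (ν * (j + 1)) *
        (Real.log (1 + τ)) ^ (ν * (j + 1) - 1) := by
  have hL : 0 < Real.log (1 + τ) := Real.log_pos (by linarith)
  have hd1 : HasDerivAt (fun t : ℝ => Real.log (1 + t)) (1 / (1 + τ)) τ :=
    ((hasDerivAt_id τ).const_add 1).log (by simp only [id]; positivity)
  have hd2 := (hd1.rpow_const (p := ν) (Or.inl hL.ne')).neg
  have hd3 := (aux_deriv h0 (-(Real.log (1 + τ)) ^ ν)).comp τ hd2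
  have := hd3.deriv
  simp only [Function.comp_def, Pi.neg_apply] at this
  rw [this, ← tsum_mul_left, ← tsum_mul_right]
  refine tsum_congr fun j => ?_
  set L := Real.log (1 + τ)
  have hG : 0 < Real.Gamma (ν * (j + 1)) := Real.Gamma_pos_of_pos (by positivity)
  rw [Real.Gamma_add_one (by positivity), neg_pow (L ^ ν),
    show ν * ((j : ℝ) + 1) - 1 = ν * j + (ν - 1) by ring, Real.rpow_add hL, Real.rpow_mul hL.le,
    Real.rpow_natCast, pow_succ]
  field_simp

/-- The relaxation response `σ(t) = E_ν(−(log(1+t))^ν)` solves the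
fractional relaxation equation of the modified Maxwell model with `E = θ = η₀ = 1`. -/
theorem relaxation_response_solves_fractional_maxwell (ν : ℝ)
    (hν : ν ∈ Set.Ioo (0:ℝ) 1) (σ : ℝ → ℝ)
    (hσ : σ = fun t : ℝ => mittagLeffler ν (-(Real.log (1 + t)) ^ ν)) :
    ∀ t : ℝ, 0 < t →
      (1 / Real.Gamma (1 - ν)) *
        ∫ τ in (0:ℝ)..t,
          (Real.log ((1 + t) / (1 + τ))) ^ (-ν) * deriv σ τ = -σ t := by
  intro t ht
  obtain ⟨h0, h1⟩ := hν
  have hT : 0 < Real.log (1 + t) := Real.log_pos (by linarith)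
  have hm := aux_main h0 h1 hT
  have himg : (fun τ : ℝ => Real.log (1 + τ)) '' Ioo 0 t = Ioo 0 (Real.log (1 + t)) := by
    ext u
    constructor
    · rintro ⟨τ, ⟨a, b⟩, rfl⟩
      exact ⟨Real.log_pos (by linarith), Real.log_lt_log (by linarith) (by linarith)⟩
    · rintro ⟨a, b⟩
      refine ⟨Real.exp u - 1, ⟨?_, ?_⟩, by simp⟩
      · have := Real.add_one_lt_exp a.ne'
        linarith
      · have := (Real.lt_log_iff_exp_lt (by linarith)).1 b
        linarith
  have hinj : InjOn (fun τ : ℝ => Real.log (1 + τ)) (Ioo 0 t) := by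
    intro a ha b hb hab
    have := Real.log_injOn_pos (show 1 + a ∈ Ioi (0:ℝ) from by have := ha.1; simp; linarith)
      (show 1 + b ∈ Ioi (0:ℝ) from by have := hb.1; simp; linarith) hab
    linarith
  rw [← himg, integral_image_eq_integral_abs_deriv_smul measurableSet_Ioo
    (f' := fun τ => 1 / (1 + τ)) (fun τ hτ => by
      refine HasDerivAt.hasDerivWithinAt ?_
      refine ((hasDerivAt_id τ).const_add 1).log ?_
      have := hτ.1
      simp only [id]; positivity) hinj] at hm
  have hcongr : ∫ τ in (0:ℝ)..t, (Real.log ((1 + t) / (1 + τ))) ^ (-ν) * deriv σ τ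
      = -Real.Gamma (1 - ν) * mittagLeffler ν (-Real.log (1 + t) ^ ν) := by
    rw [← hm, intervalIntegral.integral_of_le ht.le, integral_Ioc_eq_integral_Ioo]
    refine setIntegral_congr_fun measurableSet_Ioo fun τ hτ => ?_
    have hτ0 := hτ.1
    rw [hσ, aux_sigma_deriv h0 hτ0, Real.log_div (by positivity) (by positivity),
      abs_of_pos (by positivity), smul_eq_mul, show 1 - ν - 1 = -ν by ring, mul_left_comm,
      ← tsum_mul_left]
    congr 1
    refine tsum_congr fun j => ?_
    ring
  have hG : Real.Gamma (1 - ν) ≠ 0 := (Real.Gamma_pos_of_pos (by linarith)).ne'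
  rw [hcongr, hσ]
  field_simp
end

section
/- For every ν ∈ (0,1) and every integer N ≥ 1, the Mittag-Leffler function of negative argument admits the asymptotic expansion E_ν(−x) ∼ −∑_{n=1}^∞ (−1)^{n−1} x^{−n} / Γ(1−νn) as x → +∞, in the sense that x^N · (E_ν(−x) − ∑_{n=1}^{N} (−1)^{n} x^{−n} / Γ(1−νn) · (−1)) → 0 as x → +∞; that is, E_ν(−x) = ∑_{n=1}^{N} (−1)^{n−1} x^{−n}/Γ(1−νn) + o(x^{−N}) as x → +∞ (with the convention that 1/Γ(1−νn) = 0 when 1−νn is a nonpositive integer). -/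
open Real Filter Finset

open MeasureTheory in
/-- integral along the Hankel contour in logarithmic coordinate -/
noncomputable def HK (F : ℂ → ℂ) (a : ℝ) : ℂ :=
  (∫ u in Set.Ioi a, F ((u:ℂ) + (π:ℂ) * Complex.I)) -
  (∫ u in Set.Ioi a, F ((u:ℂ) + ((-π : ℝ):ℂ) * Complex.I)) +
  Complex.I * ∫ θ in (-π)..π, F ((a:ℂ) + (θ:ℂ) * Complex.I)

open MeasureTheory in
structure HGood (F : ℂ → ℂ) : Prop where
  diff : ∀ w : ℂ, |w.im| ≤ π → DifferentiableAt ℂ F w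
  ip : ∀ a : ℝ, IntegrableOn (fun u : ℝ => F ((u:ℂ) + (π:ℂ) * Complex.I)) (Set.Ioi a)
  im : ∀ a : ℝ, IntegrableOn (fun u : ℝ => F ((u:ℂ) + ((-π : ℝ):ℂ) * Complex.I)) (Set.Ioi a)

lemma HGood.iv {F : ℂ → ℂ} (h : HGood F) (a : ℝ) :
    IntervalIntegrable (fun θ : ℝ => F ((a:ℂ) + (θ:ℂ) * Complex.I)) MeasureTheory.volume (-π) π := by
  apply ContinuousOn.intervalIntegrable
  intro θ hθ
  rw [Set.uIcc_of_le (by linarith [pi_pos])] at hθ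
  apply ContinuousAt.continuousWithinAt
  have h1 : ContinuousAt F ((a:ℂ) + (θ:ℂ) * Complex.I) := by
    refine (h.diff _ ?_).continuousAt
    simpa [abs_le] using hθ
  exact ContinuousAt.comp (f := fun θ : ℝ => (a:ℂ) + (θ:ℂ) * Complex.I) h1 (by fun_prop)

lemma HK_indep {F : ℂ → ℂ} (h : HGood F) (a b : ℝ) : HK F a = HK F b := by
  have key := Complex.integral_boundary_rect_eq_zero_of_differentiableOn F
    ((a:ℂ) + ((-π : ℝ):ℂ) * Complex.I) ((b:ℂ) + (π:ℂ) * Complex.I) (by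
      intro w hw
      refine (h.diff w ?_).differentiableWithinAt
      have := hw.2
      simp only [Set.mem_preimage] at this
      rw [Set.uIcc_of_le (by simp; linarith [pi_pos])] at this
      simpa [abs_le] using this)
  have e1 := intervalIntegral.integral_interval_add_Ioi (h.ip a) (h.ip b)
  have e2 := intervalIntegral.integral_interval_add_Ioi (h.im a) (h.im b)
  simp only [Complex.add_re, Complex.ofReal_re, Complex.mul_re, Complex.I_re, mul_zero,
    Complex.ofReal_im, Complex.I_im, mul_one, sub_self, add_zero, Complex.add_im, Complex.mul_im,
    zero_add, smul_eq_mul] at key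
  unfold HK
  rw [← e1, ← e2]
  linear_combination -key

open MeasureTheory in
lemma HK_add {F G : ℂ → ℂ} (hF : HGood F) (hG : HGood G) (a : ℝ) (c : ℂ) :
    HK (fun w => F w + c * G w) a = HK F a + c * HK G a := by
  unfold HK
  rw [integral_add (hF.ip a) ((hG.ip a).const_mul c),
    integral_add (hF.im a) ((hG.im a).const_mul c),
    intervalIntegral.integral_add (hF.iv a) ((hG.iv a).const_mul c)]
  simp only [MeasureTheory.integral_const_mul, intervalIntegral.integral_const_mul]
  ring

open MeasureTheory in
lemma HK_norm_le {F : ℂ → ℂ} (a M h0 : ℝ) (h : ℝ → ℝ) (hM : IntegrableOn h (Set.Ioi a))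
    (h1 : ∀ u : ℝ, a < u → ‖F ((u:ℂ) + (π:ℂ) * Complex.I)‖ ≤ M * h u)
    (h2 : ∀ u : ℝ, a < u → ‖F ((u:ℂ) + ((-π : ℝ):ℂ) * Complex.I)‖ ≤ M * h u)
    (h3 : ∀ θ : ℝ, |θ| ≤ π → ‖F ((a:ℂ) + (θ:ℂ) * Complex.I)‖ ≤ M * h0) :
    ‖HK F a‖ ≤ M * (2 * (∫ u in Set.Ioi a, h u) + h0 * (2 * π)) := by
  have b1 : ‖∫ u in Set.Ioi a, F ((u:ℂ) + (π:ℂ) * Complex.I)‖ ≤ ∫ u in Set.Ioi a, M * h u :=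
    norm_integral_le_of_norm_le (hM.const_mul M)
      ((ae_restrict_iff' measurableSet_Ioi).2 (Eventually.of_forall h1))
  have b2 : ‖∫ u in Set.Ioi a, F ((u:ℂ) + ((-π : ℝ):ℂ) * Complex.I)‖ ≤
      ∫ u in Set.Ioi a, M * h u :=
    norm_integral_le_of_norm_le (hM.const_mul M)
      ((ae_restrict_iff' measurableSet_Ioi).2 (Eventually.of_forall h2))
  have b3 : ‖∫ θ in (-π)..π, F ((a:ℂ) + (θ:ℂ) * Complex.I)‖ ≤ M * h0 * |π - -π| := by
    apply intervalIntegral.norm_integral_le_of_norm_le_const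
    intro θ hθ
    rw [Set.uIoc_of_le (by linarith [pi_pos])] at hθ
    exact h3 θ (abs_le.2 ⟨hθ.1.le, hθ.2⟩)
  rw [show |π - -π| = 2 * π by rw [abs_of_pos] <;> linarith [pi_pos]] at b3
  rw [MeasureTheory.integral_const_mul] at b1 b2
  have b4 : ‖Complex.I * ∫ θ in (-π)..π, F ((a:ℂ) + (θ:ℂ) * Complex.I)‖ ≤ M * h0 * (2 * π) := by
    rw [norm_mul, Complex.norm_I, one_mul]; exact b3
  unfold HK
  refine (norm_add_le _ _).trans ?_
  have := norm_sub_le (∫ u in Set.Ioi a, F ((u:ℂ) + (π:ℂ) * Complex.I))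
    (∫ u in Set.Ioi a, F ((u:ℂ) + ((-π : ℝ):ℂ) * Complex.I))
  linarith

/-- basic integrand -/
noncomputable def fs (s : ℝ) (w : ℂ) : ℂ := Complex.exp (Complex.exp w - s * w)

lemma fs_diff (s : ℝ) : Differentiable ℂ (fs s) := by unfold fs; fun_prop

lemma fs_norm (s a θ : ℝ) : ‖fs s ((a:ℂ) + (θ:ℂ) * Complex.I)‖ =
    rexp (rexp a * Real.cos θ - s * a) := by
  unfold fs
  rw [Complex.norm_exp]
  congr 1
  simp [Complex.exp_re]

lemma fs_norm_le (s a θ : ℝ) : ‖fs s ((a:ℂ) + (θ:ℂ) * Complex.I)‖ ≤ rexp (rexp a - s * a) := by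
  rw [fs_norm]
  apply Real.exp_le_exp.2
  have := mul_le_mul_of_nonneg_left (Real.cos_le_one θ) (Real.exp_pos a).le
  linarith

lemma fs_norm_p (s a : ℝ) : ‖fs s ((a:ℂ) + (π:ℂ) * Complex.I)‖ = rexp (-rexp a - s * a) := by
  rw [fs_norm]; simp

lemma fs_norm_m (s a : ℝ) : ‖fs s ((a:ℂ) + ((-π : ℝ):ℂ) * Complex.I)‖ =
    rexp (-rexp a - s * a) := by
  rw [fs_norm]; simp

lemma tend_aux (s : ℝ) : Tendsto (fun u : ℝ => rexp (-rexp u - s * u)) atTop (nhds 0) := by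
  have := (tendsto_rpow_mul_exp_neg_mul_atTop_nhds_zero (-s) 1 one_pos).comp Real.tendsto_exp_atTop
  refine this.congr fun u => ?_
  simp only [Function.comp]
  rw [← Real.exp_mul, ← Real.exp_add]
  congr 1; ring

open MeasureTheory in
lemma int_aux (s a : ℝ) : IntegrableOn (fun u : ℝ => rexp (-rexp u - s * u)) (Set.Ioi a) := by
  apply integrable_of_isBigO_exp_neg one_pos (by fun_prop)
  have h1 : Tendsto (fun u : ℝ => rexp (-rexp u - s * u) / rexp (-1 * u)) atTop (nhds 0) := by
    refine (tend_aux (s - 1)).congr fun u => ?_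
    rw [← Real.exp_sub]
    congr 1; ring
  exact (Asymptotics.isLittleO_of_tendsto (fun x hx => absurd hx (Real.exp_pos _).ne') h1).isBigO

lemma fs_good (s : ℝ) : HGood (fs s) where
  diff w _ := fs_diff s w
  ip a := by
    have hc : Continuous fun u : ℝ => fs s ((u:ℂ) + (π:ℂ) * Complex.I) :=
      (fs_diff s).continuous.comp (by fun_prop)
    refine (int_aux s a).mono' hc.aestronglyMeasurable ?_
    exact Eventually.of_forall fun u => (fs_norm_p s u).le
  im a := by
    have hc : Continuous fun u : ℝ => fs s ((u:ℂ) + ((-π : ℝ):ℂ) * Complex.I) :=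
      (fs_diff s).continuous.comp (by fun_prop)
    refine (int_aux s a).mono' hc.aestronglyMeasurable ?_
    exact Eventually.of_forall fun u => (fs_norm_m s u).le

/-- recurrence -/
lemma fs_rec (s a : ℝ) : HK (fs (s - 1)) a = s * HK (fs s) a := by
  have hd : ∀ w, HasDerivAt (fs s) (fs (s-1) w + (-s : ℂ) * fs s w) w := by
    intro w
    have : HasDerivAt (fs s) (Complex.exp (Complex.exp w - s * w) * (Complex.exp w - s * 1)) w :=
      ((Complex.hasDerivAt_exp w).sub ((hasDerivAt_id w).const_mul (s:ℂ))).cexp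
    convert! this using 1
    unfold fs
    have : Complex.exp (Complex.exp w - ((s - 1 : ℝ) : ℂ) * w) =
        Complex.exp (Complex.exp w - s * w) * Complex.exp w := by
      rw [← Complex.exp_add]; congr 1; push_cast; ring
    rw [this]; ring
  have hh : ∀ c u : ℝ, HasDerivAt (fun u : ℝ => fs s ((u:ℂ) + (c:ℂ) * Complex.I))
      (fs (s-1) ((u:ℂ) + (c:ℂ) * Complex.I) + (-s : ℂ) * fs s ((u:ℂ) + (c:ℂ) * Complex.I)) u := by
    intro c u
    have h1 : HasDerivAt (fun u : ℂ => u + (c:ℂ) * Complex.I) 1 (u:ℂ) :=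
      (hasDerivAt_id _).add_const _
    simpa using ((hd _).comp (u:ℂ) h1).comp_ofReal
  have hv : ∀ u : ℝ, HasDerivAt (fun θ : ℝ => fs s ((a:ℂ) + (θ:ℂ) * Complex.I))
      (Complex.I * (fs (s-1) ((a:ℂ) + (u:ℂ) * Complex.I) +
        (-s : ℂ) * fs s ((a:ℂ) + (u:ℂ) * Complex.I))) u := by
    intro u
    have h1 : HasDerivAt (fun u : ℂ => (a:ℂ) + u * Complex.I) (1 * Complex.I) (u:ℂ) :=
      ((hasDerivAt_id _).mul_const _).const_add _
    have := ((hd _).comp (u:ℂ) h1).comp_ofReal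
    rw [one_mul, mul_comm] at this
    exact this
  have key : HK (fun w => fs (s-1) w + (-s : ℂ) * fs s w) a = 0 := by
    unfold HK
    rw [MeasureTheory.integral_Ioi_of_hasDerivAt_of_tendsto' (fun u _ => hh π u)
        (((fs_good (s-1)).ip a).add (((fs_good s).ip a).const_mul _)) (m := 0)
        (tendsto_zero_iff_norm_tendsto_zero.2 (by simp only [fs_norm_p]; exact tend_aux s)),
      MeasureTheory.integral_Ioi_of_hasDerivAt_of_tendsto' (fun u _ => hh (-π) u)
        (((fs_good (s-1)).im a).add (((fs_good s).im a).const_mul _)) (m := 0)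
        (tendsto_zero_iff_norm_tendsto_zero.2 (by simp only [fs_norm_m]; exact tend_aux s)),
      ← intervalIntegral.integral_const_mul,
      intervalIntegral.integral_eq_sub_of_hasDerivAt (fun u _ => hv u)
        ((((fs_good (s-1)).iv a).add (((fs_good s).iv a).const_mul _)).const_mul _)]
    ring
  rw [HK_add (fs_good _) (fs_good _)] at key
  linear_combination key

lemma fs_zero (a : ℝ) : HK (fs 0) a = 2 * π * Complex.I := by
  have h1 : ∀ b : ℝ, HK (fs 0) b =
      Complex.I * ∫ θ in (-π)..π, fs 0 ((b:ℂ) + (θ:ℂ) * Complex.I) := by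
    intro b
    unfold HK
    have : ∀ u : ℝ, fs 0 ((u:ℂ) + (π:ℂ) * Complex.I) =
        fs 0 ((u:ℂ) + ((-π : ℝ):ℂ) * Complex.I) := by
      intro u; simp [fs, Complex.exp_add, Complex.exp_neg]
    simp only [this, sub_self, zero_add]
  have h2 : Tendsto (fun b : ℝ => ∫ θ in (-π)..π, fs 0 ((b:ℂ) + (θ:ℂ) * Complex.I)) atBot
      (nhds (∫ θ in (-π)..π, (1:ℂ))) := by
    apply intervalIntegral.tendsto_integral_filter_of_dominated_convergence (fun _ => rexp 1)
    · refine Eventually.of_forall fun b => ?_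
      exact ((fs_diff 0).continuous.comp (by fun_prop)).aestronglyMeasurable
    · filter_upwards [eventually_le_atBot 0] with b hb
      refine Eventually.of_forall fun θ _ => (fs_norm_le 0 b θ).trans ?_
      apply Real.exp_le_exp.2
      have := Real.exp_le_one_iff.2 hb
      linarith
    · simp
    · refine Eventually.of_forall fun θ _ => ?_
      have : Tendsto (fun b : ℝ => Complex.exp ((b:ℂ) + (θ:ℂ) * Complex.I)) atBot (nhds 0) := by
        rw [tendsto_zero_iff_norm_tendsto_zero]
        simp only [Complex.norm_exp]
        simpa using Real.tendsto_exp_atBot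
      have h3 := (Complex.continuous_exp.tendsto 0).comp this
      simpa [fs, Function.comp_def] using h3
  have h3 : Tendsto (fun b : ℝ => HK (fs 0) b) atBot
      (nhds (Complex.I * ∫ θ in (-π)..π, (1:ℂ))) := by
    simp only [h1]
    exact h2.const_mul _
  have h4 : Tendsto (fun b : ℝ => HK (fs 0) b) atBot (nhds (HK (fs 0) a)) := by
    have : (fun b : ℝ => HK (fs 0) b) = fun _ => HK (fs 0) a := by
      funext b; exact HK_indep (fs_good 0) b a
    rw [this]; exact tendsto_const_nhds
  rw [tendsto_nhds_unique h4 h3]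
  simp
  ring

lemma fs_p (s u : ℝ) : fs s ((u:ℂ) + (π:ℂ) * Complex.I) =
    ((rexp (-rexp u - s * u) : ℝ) : ℂ) * Complex.exp (-(s * π * Complex.I)) := by
  unfold fs
  rw [Complex.exp_add, Complex.exp_pi_mul_I]
  push_cast
  rw [← Complex.exp_add]
  congr 1; ring

lemma fs_m (s u : ℝ) : fs s ((u:ℂ) + ((-π : ℝ):ℂ) * Complex.I) =
    ((rexp (-rexp u - s * u) : ℝ) : ℂ) * Complex.exp (s * π * Complex.I) := by
  unfold fs
  have : Complex.exp (((-π : ℝ):ℂ) * Complex.I) = -1 := by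
    push_cast
    rw [neg_mul, Complex.exp_neg, Complex.exp_pi_mul_I]; norm_num
  rw [Complex.exp_add, this]
  push_cast
  rw [← Complex.exp_add]
  congr 1; ring

open MeasureTheory in
lemma gam_tend (s : ℝ) (hs : s < 0) :
    Tendsto (fun n : ℕ => ∫ u in Set.Ioi (-(n:ℝ)), rexp (-rexp u - s * u)) atTop
      (nhds (Real.Gamma (-s))) := by
  have h1 : ∀ a : ℝ, (∫ u in Set.Ioi a, rexp (-rexp u - s * u)) =
      ∫ y in Set.Ioi (rexp a), rexp (-y) * y ^ (-s - 1) := by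
    intro a
    rw [← integral_comp_exp_Ioi]
    refine integral_congr_ae (Eventually.of_forall fun u => ?_)
    simp only [smul_eq_mul]
    rw [← Real.exp_mul, ← Real.exp_add, ← Real.exp_add]
    congr 1; ring
  simp only [h1]
  have hU : (⋃ n : ℕ, Set.Ioi (rexp (-(n:ℝ)))) = Set.Ioi 0 := by
    ext y
    simp only [Set.mem_iUnion, Set.mem_Ioi]
    constructor
    · rintro ⟨n, hn⟩; exact (Real.exp_pos _).trans hn
    · intro hy
      obtain ⟨n, hn⟩ := exists_nat_gt (-Real.log y)
      refine ⟨n, ?_⟩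
      rw [← Real.lt_log_iff_exp_lt hy]; linarith
  rw [Real.Gamma_eq_integral (by linarith : 0 < -s), ← hU]
  apply tendsto_setIntegral_of_monotone (fun _ => measurableSet_Ioi)
  · intro i j hij
    apply Set.Ioi_subset_Ioi
    apply Real.exp_le_exp.2
    simpa using hij
  · rw [hU]; exact Real.GammaIntegral_convergent (by linarith)

lemma hankel_neg (s a : ℝ) (hs : s < 0) :
    HK (fs s) a = 2 * π * Complex.I * (((Real.Gamma (1 + s))⁻¹ : ℝ) : ℂ) := by
  have hv : Tendsto (fun n : ℕ => ∫ θ in (-π)..π,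
      fs s (((-(n:ℝ) : ℝ):ℂ) + (θ:ℂ) * Complex.I)) atTop (nhds 0) := by
    have hb : Tendsto (fun n : ℕ => rexp (rexp (-(n:ℝ)) - s * (-(n:ℝ))) * |π - -π|)
        atTop (nhds 0) := by
      rw [show (0:ℝ) = 0 * |π - -π| by simp]
      apply Tendsto.mul_const
      have hn : Tendsto (fun n : ℕ => -(n:ℝ)) atTop atBot :=
        tendsto_neg_atTop_atBot.comp tendsto_natCast_atTop_atTop
      apply Real.tendsto_exp_atBot.comp
      apply Tendsto.add_atBot (Real.tendsto_exp_atBot.comp hn)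
      have := hn.const_mul_atBot (show 0 < -s by linarith)
      simpa using this
    apply squeeze_zero_norm _ hb
    intro n
    apply intervalIntegral.norm_integral_le_of_norm_le_const
    intro θ _
    exact fs_norm_le s _ θ
  have h1 : ∀ b : ℝ, HK (fs s) b =
      (((∫ u in Set.Ioi b, rexp (-rexp u - s * u) : ℝ)) : ℂ) *
        (-2 * Complex.I * Complex.sin (s * π)) +
      Complex.I * ∫ θ in (-π)..π, fs s ((b:ℂ) + (θ:ℂ) * Complex.I) := by
    intro b
    unfold HK
    simp only [fs_p, fs_m, MeasureTheory.integral_mul_const]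
    rw [integral_complex_ofReal, Complex.sin]
    simp only [neg_mul]
    generalize Complex.exp (-(s * π * Complex.I)) = A
    generalize Complex.exp ((s * π * Complex.I)) = B
    have := Complex.I_mul_I
    linear_combination ((A - B) * (∫ u in Set.Ioi b, rexp (-rexp u - s * u) : ℝ)) * this
  have h3 : Tendsto (fun n : ℕ => HK (fs s) (-(n:ℝ))) atTop
      (nhds ((Real.Gamma (-s) : ℂ) * (-2 * Complex.I * Complex.sin (s * π)) + Complex.I * 0)) := by
    simp only [h1]
    exact (((Complex.continuous_ofReal.tendsto _).comp (gam_tend s hs)).mul_const _).add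
      (hv.const_mul _)
  have h4 : Tendsto (fun n : ℕ => HK (fs s) (-(n:ℝ))) atTop (nhds (HK (fs s) a)) := by
    have : (fun n : ℕ => HK (fs s) (-(n:ℝ))) = fun _ => HK (fs s) a := by
      funext b; exact HK_indep (fs_good s) _ a
    rw [this]; exact tendsto_const_nhds
  rw [tendsto_nhds_unique h4 h3]
  have hg := Real.Gamma_mul_Gamma_one_sub (-s)
  have hp : Real.Gamma (-s) ≠ 0 := (Real.Gamma_pos_of_pos (by linarith)).ne'
  have hg2 : (Real.Gamma (1 + s))⁻¹ = -(Real.Gamma (-s) * Real.sin (s * π)) / π := by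
    have : Real.Gamma (1 + s) = π / Real.sin (π * -s) / Real.Gamma (-s) := by
      rw [← hg]; field_simp; ring_nf
    rw [this, show π * -s = -(s * π) by ring, Real.sin_neg, inv_div, div_div_eq_mul_div]
    ring
  rw [hg2]
  push_cast
  have : (π:ℂ) ≠ 0 := by exact_mod_cast pi_ne_zero
  field_simp
  ring

lemma hankel (s a : ℝ) :
    HK (fs s) a = 2 * π * Complex.I * (((Real.Gamma (1 + s))⁻¹ : ℝ) : ℂ) := by
  have : ∀ n : ℕ, ∀ s : ℝ, s ≤ n →
      HK (fs s) a = 2 * π * Complex.I * (((Real.Gamma (1 + s))⁻¹ : ℝ) : ℂ) := by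
    intro n
    induction n with
    | zero =>
      intro s hs
      rcases lt_or_eq_of_le hs with h | h
      · exact hankel_neg s a (by simpa using h)
      · simp only [Nat.cast_zero] at h
        subst h
        rw [fs_zero]; simp
    | succ n ih =>
      intro s hs
      by_cases h0 : s ≤ n
      · exact ih s h0
      have hs0 : s ≠ 0 := by
        have : (0:ℝ) ≤ n := Nat.cast_nonneg n
        intro h; apply h0; linarith
      have h1 := fs_rec s a
      rw [ih (s - 1) (by push_cast at hs; linarith)] at h1
      have h2 := Real.Gamma_add_one hs0
      rw [add_comm 1 s, h2]
      rw [show 1 + (s - 1) = s by ring] at h1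
      have hs1 : (s:ℂ) ≠ 0 := by exact_mod_cast hs0
      apply mul_left_cancel₀ hs1
      rw [← h1, mul_inv]
      push_cast
      field_simp
  obtain ⟨n, hn⟩ := exists_nat_ge s
  exact this n s hn

lemma den_bound (ν : ℝ) (hν : ν ∈ Set.Ioo (0:ℝ) 1) : ∃ m > 0, ∀ x : ℝ, 0 < x → ∀ w : ℂ,
    |w.im| ≤ π → m * x ≤ ‖Complex.exp (ν * w) + x‖ := by
  have hk : -1 < Real.cos (ν * π) := by
    rw [← Real.cos_pi]
    apply Real.cos_lt_cos_of_nonneg_of_le_pi (by have := pi_pos; have := hν.1; positivity) le_rfl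
    nlinarith [hν.2, pi_pos]
  set κ := Real.cos (ν * π) with hκ
  refine ⟨√((1 + κ) / 2), Real.sqrt_pos.2 (by linarith), ?_⟩
  intro x hx w hw
  have hc : κ ≤ Real.cos (ν * w.im) := by
    rw [← Real.cos_abs (ν * w.im), abs_mul, abs_of_pos hν.1]
    apply Real.cos_le_cos_of_nonneg_of_le_pi (mul_nonneg hν.1.le (abs_nonneg _))
    · nlinarith [hν.2, pi_pos]
    · exact mul_le_mul_of_nonneg_left hw hν.1.le
  have hk1 : κ ≤ 1 := Real.cos_le_one _
  apply le_of_sq_le_sq _ (norm_nonneg _)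
  rw [mul_pow, Real.sq_sqrt (by linarith), ← Complex.normSq_eq_norm_sq, Complex.normSq_apply]
  simp only [Complex.add_re, Complex.exp_re, Complex.add_im, Complex.exp_im, Complex.ofReal_re,
    Complex.ofReal_im, Complex.mul_re, Complex.mul_im, zero_mul, sub_zero, add_zero]
  have hr : 0 < rexp (ν * w.re) := Real.exp_pos _
  set r := rexp (ν * w.re)
  have hsc := Real.sin_sq_add_cos_sq (ν * w.im)
  set c := Real.cos (ν * w.im)
  set d := Real.sin (ν * w.im)
  have e : (r * c + x) * (r * c + x) + r * d * (r * d) = r ^ 2 + x ^ 2 + 2 * (r * x) * c := by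
    linear_combination r ^ 2 * hsc
  rw [e]
  have h1 : r * x * κ ≤ r * x * c := mul_le_mul_of_nonneg_left hc (by positivity)
  have h2 : 0 ≤ (1 - κ) * (r - x) ^ 2 := mul_nonneg (by linarith) (sq_nonneg _)
  have h3 : 0 ≤ (1 + κ) * (r ^ 2 + 2 * (r * x)) := mul_nonneg (by linarith) (by positivity)
  nlinarith

noncomputable def Gs (ν x s : ℝ) (w : ℂ) : ℂ := fs s w / (Complex.exp (ν * w) + x)

lemma den_ne {ν x m : ℝ} (hm : 0 < m) (hx : 0 < x)
    (h : ∀ w : ℂ, |w.im| ≤ π → m * x ≤ ‖Complex.exp (ν * w) + x‖) (w : ℂ) (hw : |w.im| ≤ π) :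
    Complex.exp (ν * w) + x ≠ 0 := by
  rw [← norm_pos_iff]; exact (mul_pos hm hx).trans_le (h w hw)

lemma Gs_norm {ν x m : ℝ} (hm : 0 < m) (hx : 0 < x)
    (h : ∀ w : ℂ, |w.im| ≤ π → m * x ≤ ‖Complex.exp (ν * w) + x‖) (s : ℝ) (w : ℂ)
    (hw : |w.im| ≤ π) : ‖Gs ν x s w‖ ≤ (1 / (m * x)) * ‖fs s w‖ := by
  unfold Gs
  rw [norm_div, div_eq_mul_inv, mul_comm, ← one_div]
  exact mul_le_mul_of_nonneg_right (one_div_le_one_div_of_le (mul_pos hm hx) (h w hw))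
    (norm_nonneg _)

lemma Gs_good {ν x m : ℝ} (hm : 0 < m) (hx : 0 < x)
    (h : ∀ w : ℂ, |w.im| ≤ π → m * x ≤ ‖Complex.exp (ν * w) + x‖) (s : ℝ) :
    HGood (Gs ν x s) := by
  have hd : ∀ w : ℂ, |w.im| ≤ π → DifferentiableAt ℂ (Gs ν x s) w := by
    intro w hw
    exact (fs_diff s w).div (by fun_prop) (den_ne hm hx h w hw)
  have hcc : ∀ c : ℝ, |c| ≤ π → Continuous fun u : ℝ => Gs ν x s ((u:ℂ) + (c:ℂ) * Complex.I) := by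
    intro c hc
    rw [continuous_iff_continuousAt]
    intro u
    have h1 : ContinuousAt (Gs ν x s) ((u:ℂ) + (c:ℂ) * Complex.I) :=
      (hd _ (by simpa using hc)).continuousAt
    exact ContinuousAt.comp (f := fun u : ℝ => (u:ℂ) + (c:ℂ) * Complex.I) h1 (by fun_prop)
  refine ⟨hd, fun a => ?_, fun a => ?_⟩
  · refine (((fs_good s).ip a).norm.const_mul (1 / (m * x))).mono'
      (hcc π (abs_of_pos pi_pos).le).aestronglyMeasurable ?_
    exact Eventually.of_forall fun u => Gs_norm hm hx h s _ (by simp [abs_of_pos pi_pos])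
  · refine (((fs_good s).im a).norm.const_mul (1 / (m * x))).mono'
      (hcc (-π) (by simp [abs_of_pos pi_pos])).aestronglyMeasurable ?_
    exact Eventually.of_forall fun u => Gs_norm hm hx h s _ (by simp [abs_of_pos pi_pos])

lemma HK_congr {F G : ℂ → ℂ} (h : ∀ w : ℂ, |w.im| ≤ π → F w = G w) (a : ℝ) :
    HK F a = HK G a := by
  unfold HK
  congr 1
  · congr 1
    · congr 1; funext u; exact h _ (by simp [abs_of_pos pi_pos])
    · congr 1; funext u; exact h _ (by simp [abs_of_pos pi_pos])
  · congr 1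
    apply intervalIntegral.integral_congr
    intro θ hθ
    rw [Set.uIcc_of_le (by linarith [pi_pos])] at hθ
    exact h _ (by simpa [abs_le] using hθ)

lemma Gs_rec {ν x m : ℝ} (hm : 0 < m) (hx : 0 < x)
    (h : ∀ w : ℂ, |w.im| ≤ π → m * x ≤ ‖Complex.exp (ν * w) + x‖) (s a : ℝ) :
    HK (Gs ν x (s - ν)) a + x * HK (Gs ν x s) a =
      2 * π * Complex.I * (((Real.Gamma (1 + s))⁻¹ : ℝ) : ℂ) := by
  rw [← hankel s a, ← HK_add (Gs_good hm hx h _) (Gs_good hm hx h _)]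
  apply HK_congr
  intro w hw
  have hne := den_ne hm hx h w hw
  unfold Gs
  rw [← mul_div_assoc, ← add_div, div_eq_iff hne]
  have : fs (s - ν) w = fs s w * Complex.exp (ν * w) := by
    unfold fs
    rw [← Complex.exp_add]
    congr 1; push_cast; ring
  rw [this]; ring

/-- a constant controlling Hankel integrals -/
noncomputable def CC (s a : ℝ) : ℝ :=
  2 * (∫ u in Set.Ioi a, rexp (-rexp u - s * u)) + rexp (rexp a - s * a) * (2 * π)

lemma HK_bd {F : ℂ → ℂ} (K s s' a : ℝ) (hs : s' ≤ s) (hK : 0 ≤ K)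
    (hF : ∀ w : ℂ, |w.im| ≤ π → ‖F w‖ ≤ K * ‖fs s w‖) :
    ‖HK F a‖ ≤ K * rexp (-(s - s') * a) * CC s' a := by
  have hmono : ∀ u, a ≤ u → ∀ c : ℝ, rexp (c - s * u) ≤ rexp (-(s - s') * a) * rexp (c - s' * u) := by
    intro u hu c
    rw [← Real.exp_add]
    apply Real.exp_le_exp.2
    nlinarith
  apply HK_norm_le a _ _ _ (int_aux s' a)
  · intro u hu
    refine (hF _ (by simp [abs_of_pos pi_pos])).trans ?_
    rw [fs_norm_p, mul_assoc]
    exact mul_le_mul_of_nonneg_left (hmono u hu.le _) hK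
  · intro u hu
    refine (hF _ (by simp [abs_of_pos pi_pos])).trans ?_
    rw [fs_norm_m, mul_assoc]
    exact mul_le_mul_of_nonneg_left (hmono u hu.le _) hK
  · intro θ hθ
    refine (hF _ (by simpa using hθ)).trans ?_
    rw [mul_assoc]
    exact mul_le_mul_of_nonneg_left ((fs_norm_le _ _ _).trans (hmono a le_rfl _)) hK

lemma norm_two_pi_I : ‖(2 * π * Complex.I : ℂ)‖ = 2 * π := by
  simp [abs_of_pos pi_pos]

lemma ML_eq {ν x m : ℝ} (hν : 0 < ν) (hm : 0 < m) (hx : 0 < x)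
    (h : ∀ w : ℂ, |w.im| ≤ π → m * x ≤ ‖Complex.exp (ν * w) + x‖) :
    HK (Gs ν x (-ν)) 0 = 2 * π * Complex.I * ((mittagLeffler ν (-x) : ℝ) : ℂ) := by
  set a : ℝ := Real.log (2 * x) / ν with ha
  have hea : rexp (-ν * a) = 1 / (2 * x) := by
    rw [ha, show -ν * (Real.log (2 * x) / ν) = -Real.log (2 * x) by field_simp, Real.exp_neg,
      Real.exp_log (by positivity)]; simp
  have hq : ∀ n : ℕ, x ^ n * rexp (-(ν * n) * a) = (1 / 2) ^ n := by
    intro n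
    rw [show -(ν * n) * a = (n:ℝ) * (-ν * a) by ring, Real.exp_nat_mul, hea, ← mul_pow]
    congr 1; field_simp
  rw [HK_indep (Gs_good hm hx h _) 0 a]
  have hsum : Summable fun k : ℕ => (-x) ^ k / Real.Gamma (ν * k + 1) := by
    have hgeo : Summable fun k : ℕ => (1/2 : ℝ) ^ k * (CC 0 a / (2 * π)) :=
      (summable_geometric_of_lt_one (by norm_num) (by norm_num)).mul_right _
    apply Summable.of_norm_bounded hgeo
    intro k
    have h1 := HK_bd (F := fs (ν * k)) 1 (ν * k) 0 a (by positivity) zero_le_one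
      (fun w _ => by simp)
    rw [hankel, norm_mul, norm_two_pi_I, Complex.norm_real, one_mul, sub_zero] at h1
    rw [norm_div, norm_pow, norm_neg, Real.norm_of_nonneg hx.le, div_eq_mul_inv, ← norm_inv,
      ← hq, mul_assoc, add_comm]
    refine mul_le_mul_of_nonneg_left ?_ (by positivity)
    rw [← mul_div_assoc, le_div_iff₀ (by positivity), mul_comm]
    exact h1
  have hexp : ∀ n : ℕ, HK (Gs ν x (-ν)) a = 2 * π * Complex.I *
      ((∑ k ∈ Finset.range n, (-x) ^ k / Real.Gamma (ν * k + 1) : ℝ) : ℂ) +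
      (-x) ^ n * HK (Gs ν x (ν * n - ν)) a := by
    intro n
    induction n with
    | zero => simp
    | succ n ih =>
      rw [ih, Finset.sum_range_succ]
      have := Gs_rec hm hx h (ν * n) a
      rw [show ν * ((n + 1 : ℕ) : ℝ) - ν = ν * n by push_cast; ring, add_comm (ν * (n:ℝ)) 1]
      rw [eq_sub_of_add_eq this]
      push_cast
      ring
  have hrem : Tendsto (fun n : ℕ => (-x : ℂ) ^ n * HK (Gs ν x (ν * n - ν)) a) atTop (nhds 0) := by
    have hb : Tendsto (fun n : ℕ => (1/2 : ℝ) ^ n * (1 / (m * x) * rexp (ν * a) * CC 0 a))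
        atTop (nhds 0) := by
      have := (tendsto_pow_atTop_nhds_zero_of_lt_one (r := (1/2 : ℝ)) (by norm_num)
        (by norm_num)).mul_const (1 / (m * x) * rexp (ν * a) * CC 0 a)
      rwa [zero_mul] at this
    apply squeeze_zero_norm' _ hb
    filter_upwards [eventually_ge_atTop 1] with n hn
    have hn' : (1:ℝ) ≤ n := by exact_mod_cast hn
    have h1 := HK_bd (F := Gs ν x (ν * n - ν)) (1 / (m * x)) (ν * n - ν) 0 a (by nlinarith)
      (by positivity) (fun w hw => Gs_norm hm hx h _ w hw)
    rw [norm_mul, norm_pow, norm_neg, Complex.norm_real, Real.norm_of_nonneg hx.le, ← hq, mul_assoc]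
    refine mul_le_mul_of_nonneg_left (h1.trans_eq ?_) (by positivity)
    rw [show -(ν * n - ν - 0) * a = -(ν * n) * a + ν * a by ring, Real.exp_add]
    ring
  have hlim : Tendsto (fun n : ℕ => 2 * π * Complex.I *
      ((∑ k ∈ Finset.range n, (-x) ^ k / Real.Gamma (ν * k + 1) : ℝ) : ℂ) +
      (-x) ^ n * HK (Gs ν x (ν * n - ν)) a) atTop
      (nhds (2 * π * Complex.I * ((mittagLeffler ν (-x) : ℝ) : ℂ) + 0)) :=
    (((Complex.continuous_ofReal.tendsto _).comp hsum.hasSum.tendsto_sum_nat).const_mul _).add hrem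
  simp only [← hexp, add_zero] at hlim
  exact tendsto_nhds_unique tendsto_const_nhds hlim

lemma Gs_back {ν x m : ℝ} (hm : 0 < m) (hx : 0 < x)
    (h : ∀ w : ℂ, |w.im| ≤ π → m * x ≤ ‖Complex.exp (ν * w) + x‖) (N : ℕ) :
    HK (Gs ν x (-ν)) 0 = 2 * π * Complex.I *
      ((∑ n ∈ Finset.Icc 1 N, (-1 : ℝ) ^ (n - 1) * x ^ (-(n:ℝ)) / Real.Gamma (1 - ν * n) : ℝ) : ℂ)
      + (-1) ^ N * ((x : ℂ) ^ N)⁻¹ * HK (Gs ν x (-ν * (N + 1))) 0 := by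
  have hxc : (x:ℂ) ≠ 0 := by exact_mod_cast hx.ne'
  induction N with
  | zero => simp
  | succ N ih =>
    rw [ih, Finset.sum_Icc_succ_top (by omega)]
    have := Gs_rec hm hx h (-ν * (N + 1)) 0
    rw [show -ν * ((N:ℝ) + 1) - ν = -ν * (((N + 1 : ℕ) : ℝ) + 1) by push_cast; ring] at this
    have h2 : HK (Gs ν x (-ν * (N + 1))) 0 = (x:ℂ)⁻¹ * (2 * π * Complex.I *
        (((Real.Gamma (1 + (-ν * (N + 1))))⁻¹ : ℝ) : ℂ) -
        HK (Gs ν x (-ν * (((N + 1 : ℕ) : ℝ) + 1))) 0) := by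
      rw [← this]; field_simp; ring
    rw [h2, Real.rpow_neg hx.le, Real.rpow_natCast,
      show 1 - ν * ((N + 1 : ℕ) : ℝ) = 1 + (-ν * (N + 1)) by push_cast; ring, Nat.add_sub_cancel]
    push_cast
    rw [pow_succ (x:ℂ), mul_inv, pow_succ (-1 : ℂ)]
    ring
/-- For `ν ∈ (0,1)` and `N ≥ 1`, the asymptotic expansion
`E_ν(−x) = ∑_{n=1}^{N} (−1)^{n−1} x^{−n}/Γ(1−νn) + o(x^{−N})` as `x → +∞`.
(In Mathlib `Real.Gamma` vanishes at nonpositive integers, so `1/Γ(1−νn) = 0`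
there, matching the stated convention.) -/
theorem mittagLeffler_asymptotic_expansion (ν : ℝ) (hν : ν ∈ Set.Ioo (0:ℝ) 1)
    (N : ℕ) (hN : 1 ≤ N) :
    Tendsto (fun x : ℝ => x ^ (N : ℝ) *
        (mittagLeffler ν (-x) -
          ∑ n ∈ Finset.Icc 1 N,
            (-1 : ℝ) ^ (n - 1) * x ^ (-(n : ℝ)) / Real.Gamma (1 - ν * n)))
      atTop (nhds 0) := by
  obtain ⟨m, hm, hden⟩ := den_bound ν hν
  have hb : Tendsto (fun x : ℝ => x⁻¹ * (1 / m * CC (-ν * (N + 1)) 0 / (2 * π))) atTop (nhds 0) := by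
    have := (tendsto_inv_atTop_zero (𝕜 := ℝ)).mul_const (1 / m * CC (-ν * (N + 1)) 0 / (2 * π))
    rwa [zero_mul] at this
  apply squeeze_zero_norm' _ hb
  filter_upwards [eventually_gt_atTop 0] with x hx
  have h := hden x hx
  have e := (ML_eq hν.1 hm hx h).symm.trans (Gs_back hm hx h N)
  have hbd := HK_bd (F := Gs ν x (-ν * (N + 1))) (1 / (m * x)) (-ν * (N + 1)) (-ν * (N + 1)) 0
    le_rfl (by positivity) (fun w hw => Gs_norm hm hx h _ w hw)
  set S := ∑ n ∈ Finset.Icc 1 N, (-1 : ℝ) ^ (n - 1) * x ^ (-(n:ℝ)) / Real.Gamma (1 - ν * n)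
  set J := HK (Gs ν x (-ν * (N + 1))) 0
  have hxc : (x:ℂ) ≠ 0 := by exact_mod_cast hx.ne'
  have e2 : (2 * π * Complex.I : ℂ) * ((x ^ (N:ℝ) * (mittagLeffler ν (-x) - S) : ℝ) : ℂ) =
      (-1) ^ N * J := by
    rw [Real.rpow_natCast]
    have h3 : ((x:ℂ) ^ N) * ((x : ℂ) ^ N)⁻¹ = 1 := mul_inv_cancel₀ (pow_ne_zero _ hxc)
    push_cast
    linear_combination ((x:ℂ) ^ N) * e + (-1) ^ N * J * h3
  have e3 := congrArg norm e2
  rw [norm_mul, norm_two_pi_I, Complex.norm_real, norm_mul ((-1 : ℂ) ^ N), norm_pow, norm_neg, norm_one, one_pow,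
    one_mul] at e3
  rw [← mul_div_assoc, le_div_iff₀ (by positivity), mul_comm, e3]
  refine hbd.trans_eq ?_
  simp
  ring
end

section
/- (Pollard) For every ν ∈ (0,1), the function x ↦ E_ν(−x) is completely monotone on (0,∞): it is infinitely differentiable on (0,∞) and for every integer n ≥ 0 and every x > 0, (−1)^n · (dⁿ/dxⁿ) E_ν(−x) ≥ 0. -/
open Real Set

theorem mlchoose (i j : ℕ) :
    (i + j).choose j * i.factorial * j.factorial = (i + j).factorial := by
  have := Nat.choose_mul_factorial_mul_factorial (n := i + j) (k := j) (by omega)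
  rw [Nat.add_sub_cancel] at this
  linarith

noncomputable def mlB (ν : ℝ) (k j : ℕ) : ℝ := ∏ i ∈ Finset.range k, (1 + ν * j / (i + 1))

noncomputable def mlA (ν : ℝ) (k j : ℕ) : ℝ := mlB ν k j * (k : ℝ) ^ (-(ν * j))

theorem mlB_rep (ν : ℝ) (h0 : 0 < ν) (h1 : ν < 1) (k : ℕ) :
    ∃ C : ℕ → ℝ, (∀ m, 0 ≤ C m) ∧
      ∀ j : ℕ, mlB ν k j = ∑ m ∈ Finset.range (k + 1), C m * ((j + m).choose m : ℝ) := by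
  induction k with
  | zero => exact ⟨fun _ => 1, fun _ => zero_le_one, fun j => by simp [mlB]⟩
  | succ k ih =>
    obtain ⟨C, hC, h⟩ := ih
    have hk : (0:ℝ) < k + 1 := by positivity
    refine ⟨fun m => (if m ≤ k then (1 - ν * (m + 1) / (k + 1)) * C m else 0)
      + ν * m / (k + 1) * C (m - 1), ?_, ?_⟩
    · intro m
      have h2 : 0 ≤ ν * m / (k + 1) * C (m - 1) :=
        mul_nonneg (by positivity) (hC _)
      have h3 : 0 ≤ (if m ≤ k then (1 - ν * (m + 1) / (k + 1)) * C m else 0) := by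
        split_ifs with hm
        · refine mul_nonneg ?_ (hC m)
          rw [sub_nonneg, div_le_one hk]
          have : (m:ℝ) ≤ k := by exact_mod_cast hm
          nlinarith
        · exact le_rfl
      exact add_nonneg h3 h2
    · intro j
      have e : mlB ν (k+1) j = mlB ν k j * (1 + ν * j / (k + 1)) := by
        simp [mlB, Finset.prod_range_succ]
      rw [e, h j]
      simp only [add_mul, Finset.sum_add_distrib]
      rw [Finset.sum_range_succ (fun m => (if m ≤ k then (1 - ν * (m + 1) / (k + 1)) * C m else 0) * ((j + m).choose m : ℝ))]
      rw [Finset.sum_range_succ' (fun m => ν * (m:ℝ) / (k + 1) * C (m - 1) * ((j + m).choose m : ℝ))]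
      simp only [Nat.cast_zero, mul_zero, zero_div, zero_mul, add_zero]
      rw [if_neg (by omega), zero_mul, add_zero, ← Finset.sum_add_distrib, Finset.sum_mul]
      refine Finset.sum_congr rfl fun m hm => ?_
      have hm' : m ≤ k := by simp at hm; omega
      rw [if_pos hm']
      have key : ((j + m + 1 : ℕ) : ℝ) * ((j+m).choose m : ℝ) = ((j + m + 1).choose (m+1) : ℝ) * ((m + 1 : ℕ):ℝ) := by
        exact_mod_cast Nat.add_one_mul_choose_eq (j+m) m
      rw [← add_assoc j m 1, Nat.add_sub_cancel]
      push_cast at key ⊢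
      have : ν * (↑m + 1) / (↑k + 1) * C m * ((j + m + 1).choose (m+1) : ℝ)
         = ν / (↑k + 1) * C m * ((j + m + 1).choose (m+1) * (m + 1)) := by ring
      rw [this, ← key]
      field_simp
      ring

theorem mlB_hasSum (ν : ℝ) (h0 : 0 < ν) (h1 : ν < 1) (k n : ℕ) :
    ∃ C : ℕ → ℝ, (∀ m, 0 ≤ C m) ∧ ∀ r : ℝ, |r| < 1 →
      HasSum (fun j : ℕ => ((j + n).descFactorial n : ℝ) * mlB ν k (j + n) * r ^ j)
        (∑ m ∈ Finset.range (k + 1), C m * (1 / (1 - r) ^ (n + m + 1))) := by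
  obtain ⟨C, hC, h⟩ := mlB_rep ν h0 h1 k
  refine ⟨fun m => C m * ((n+m).factorial / m.factorial : ℝ), fun m => mul_nonneg (hC m) (by positivity), ?_⟩
  intro r hr
  have := fun m => (hasSum_choose_mul_geometric_of_norm_lt_one (n + m) (r := r) (by simpa using hr)).mul_left (C m * ((n+m).factorial / m.factorial : ℝ))
  have := hasSum_sum (s := Finset.range (k+1)) fun m _ => this m
  refine this.congr_fun ?_
  intro j
  rw [h, Finset.mul_sum, Finset.sum_mul]
  refine Finset.sum_congr rfl fun m _ => ?_
  have e1 : ((j + n).descFactorial n : ℝ) * j.factorial = (j+n).factorial := by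
    have := Nat.factorial_mul_descFactorial (n := j + n) (k := n) (by omega)
    rw [Nat.add_sub_cancel] at this
    rw [mul_comm]; exact_mod_cast this
  have e2 : ((j + n + m).choose m : ℝ) * (j+n).factorial * m.factorial = (j + n + m).factorial := by
    exact_mod_cast mlchoose (j+n) m
  have e3 : ((j + (n + m)).choose (n + m) : ℝ) * j.factorial * (n+m).factorial = (j + n + m).factorial := by
    rw [add_assoc]
    exact_mod_cast mlchoose j (n+m)
  have p1 : (j.factorial : ℝ) ≠ 0 := by positivity
  have p2 : (m.factorial : ℝ) ≠ 0 := by positivity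
  field_simp
  have : ((j + n).descFactorial n : ℝ) * ((j + n + m).choose m : ℝ) * m.factorial = ((j + (n + m)).choose (n + m) : ℝ) * (n+m).factorial := by
    apply mul_right_cancel₀ p1
    linear_combination ((j + n + m).choose m : ℝ) * m.factorial * e1 + e2 - e3
  linear_combination (C m * r^j) * this

theorem mlB_nonneg (ν : ℝ) (h0 : 0 < ν) (k j : ℕ) : 0 ≤ mlB ν k j :=
  Finset.prod_nonneg fun i _ => by positivity

theorem mlA_nonneg (ν : ℝ) (h0 : 0 < ν) (k j : ℕ) : 0 ≤ mlA ν k j :=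
  mul_nonneg (mlB_nonneg ν h0 k j) (by positivity)

theorem mlA_anti (ν : ℝ) (h0 : 0 < ν) (K k j : ℕ) (hK : 1 ≤ K) (hk : K ≤ k) :
    mlA ν k j ≤ mlA ν K j := by
  induction k, hk using Nat.le_induction with
  | base => exact le_rfl
  | succ k hk ih =>
    refine le_trans ?_ ih
    have hk0 : (0:ℝ) < k := by exact_mod_cast (by omega : 0 < k)
    have e : mlB ν (k+1) j = mlB ν k j * (1 + ν * j / (k + 1)) := by
      simp [mlB, Finset.prod_range_succ]
    unfold mlA
    rw [e, mul_assoc]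
    refine mul_le_mul_of_nonneg_left ?_ (mlB_nonneg ν h0 k j)
    set s := ν * j with hs
    have hs0 : 0 ≤ s := by positivity
    push_cast
    have hl := Real.one_sub_inv_le_log_of_pos (x := (k+1)/k) (by positivity)
    rw [Real.log_div (by positivity) (by positivity)] at hl
    have hl2 : 1 / ((k:ℝ) + 1) ≤ Real.log (k+1) - Real.log k := by
      refine le_trans (le_of_eq ?_) hl
      field_simp
      ring
    rw [Real.rpow_def_of_pos (by positivity), Real.rpow_def_of_pos hk0]
    have h3 : 1 + s / (k+1) ≤ Real.exp (s * (Real.log (k+1) - Real.log k)) := by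
      have := Real.add_one_le_exp (s * (Real.log (k+1) - Real.log k))
      have h4 := mul_le_mul_of_nonneg_left hl2 hs0
      have : s / (k+1) = s * (1 / ((k:ℝ)+1)) := by ring
      linarith
    calc _ ≤ Real.exp (s * (Real.log (k+1) - Real.log k)) * Real.exp (Real.log (k+1) * -s) :=
          mul_le_mul_of_nonneg_right h3 (Real.exp_pos _).le
      _ = _ := by rw [← Real.exp_add]; congr 1; ring

theorem mlA_tendsto (ν : ℝ) (h0 : 0 < ν) (j : ℕ) :
    Filter.Tendsto (fun k => mlA ν k j) Filter.atTop (nhds (1 / Real.Gamma (ν * j + 1))) := by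
  rcases Nat.eq_zero_or_pos j with rfl | hj
  · simp [mlA, mlB]
  have hs : 0 < ν * j := by positivity
  rw [Real.Gamma_add_one hs.ne']
  have := (((Real.GammaSeq_tendsto_Gamma (ν * j)).const_mul (ν * j)).inv₀ (mul_pos hs (Real.Gamma_pos_of_pos hs)).ne')
  rw [one_div]
  refine this.congr' ?_
  filter_upwards [Filter.eventually_gt_atTop 0] with k hk
  have hk0 : (0:ℝ) < k := by exact_mod_cast hk
  have e : ∏ i ∈ Finset.range (k+1), (ν * j + (i:ℝ)) = ν * j * (k.factorial * mlB ν k j) := by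
    rw [Finset.prod_range_succ', mul_comm, Nat.cast_zero, add_zero]
    congr 1
    rw [← Finset.prod_range_add_one_eq_factorial, mlB, Nat.cast_prod, ← Finset.prod_mul_distrib]
    refine Finset.prod_congr rfl fun i _ => ?_
    push_cast
    field_simp
    ring
  have hB : 0 < mlB ν k j := Finset.prod_pos fun i _ => by positivity
  rw [Real.GammaSeq, e, mlA, Real.rpow_neg hk0.le]
  have : 0 < (k:ℝ) ^ (ν * j) := by positivity
  have : (k.factorial : ℝ) ≠ 0 := by positivity
  field_simp

theorem mlA_pow (ν : ℝ) (k n j : ℕ) (hk : 1 ≤ k) (R : ℝ) :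
    mlA ν k (j + n) * R ^ j
      = (k : ℝ) ^ (-(ν * n)) * (mlB ν k (j + n) * (R / (k : ℝ) ^ ν) ^ j) := by
  have hk0 : (0:ℝ) < k := by exact_mod_cast (by omega : 0 < k)
  have : (k : ℝ) ^ (-(ν * (j + n : ℕ))) = (k : ℝ) ^ (-(ν * n)) * (((k : ℝ) ^ ν) ^ j)⁻¹ := by
    rw [← Real.rpow_natCast, ← Real.rpow_mul hk0.le, ← Real.rpow_neg hk0.le,
      ← Real.rpow_add hk0]
    congr 1
    push_cast
    ring
  rw [mlA, this, div_pow]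
  ring

noncomputable def mle (ν : ℝ) (j : ℕ) : ℝ := 1 / Real.Gamma (ν * j + 1)

theorem mle_le (ν : ℝ) (h0 : 0 < ν) (K j : ℕ) (hK : 1 ≤ K) : mle ν j ≤ mlA ν K j :=
  le_of_tendsto (mlA_tendsto ν h0 j)
    (Filter.eventually_atTop.2 ⟨K, fun k hk => mlA_anti ν h0 K k j hK hk⟩)

theorem mle_nonneg (ν : ℝ) (h0 : 0 < ν) (j : ℕ) : 0 ≤ mle ν j :=
  one_div_nonneg.2 (Real.Gamma_pos_of_pos (by positivity)).le

theorem ml_exists_K (ν : ℝ) (h0 : 0 < ν) (R : ℝ) :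
    ∃ K : ℕ, 1 ≤ K ∧ ∀ k : ℕ, K ≤ k → R < (k : ℝ) ^ ν := by
  have h := (tendsto_rpow_atTop h0).comp (tendsto_natCast_atTop_atTop (R := ℝ))
  obtain ⟨K, hK⟩ := Filter.eventually_atTop.1 (h.eventually_gt_atTop R)
  exact ⟨K + 1, by omega, fun k hk => hK k (by omega)⟩

theorem mlA_summable (ν : ℝ) (h0 : 0 < ν) (h1 : ν < 1) (n k : ℕ) (hk : 1 ≤ k) (R : ℝ) (hR : 0 ≤ R)
    (hRk : R < (k : ℝ) ^ ν) :
    Summable (fun j : ℕ => ((j + n).descFactorial n : ℝ) * mlA ν k (j + n) * R ^ j) := by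
  obtain ⟨C, hC, h⟩ := mlB_hasSum ν h0 h1 k n
  have hp : 0 < (k : ℝ) ^ ν := lt_of_le_of_lt hR hRk
  have := (h (R / (k : ℝ) ^ ν) (by
    rw [abs_of_nonneg (by positivity), div_lt_one hp]; exact hRk)).summable.mul_left
      ((k : ℝ) ^ (-(ν * n)))
  refine this.congr fun j => ?_
  rw [mul_assoc _ (mlA ν k (j+n)), mlA_pow ν k n j hk]
  ring

theorem mlA_tsum_nonneg (ν : ℝ) (h0 : 0 < ν) (h1 : ν < 1) (n k : ℕ) (hk : 1 ≤ k) (R : ℝ)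
    (hR : 0 ≤ R) (hRk : R < (k : ℝ) ^ ν) :
    0 ≤ ∑' j : ℕ, ((j + n).descFactorial n : ℝ) * mlA ν k (j + n) * (-R) ^ j := by
  obtain ⟨C, hC, h⟩ := mlB_hasSum ν h0 h1 k n
  have hp : 0 < (k : ℝ) ^ ν := lt_of_le_of_lt hR hRk
  have := (h (-R / (k : ℝ) ^ ν) (by
    rw [neg_div, abs_neg, abs_of_nonneg (by positivity), div_lt_one hp]; exact hRk)).mul_left
      ((k : ℝ) ^ (-(ν * n)))
  have e : (fun j : ℕ => ((j + n).descFactorial n : ℝ) * mlA ν k (j + n) * (-R) ^ j) =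
      fun j : ℕ => (k : ℝ) ^ (-(ν * n)) *
        (((j + n).descFactorial n : ℝ) * mlB ν k (j + n) * (-R / (k : ℝ) ^ ν) ^ j) := by
    funext j
    rw [mul_assoc _ (mlA ν k (j+n)), mlA_pow ν k n j hk]
    ring
  rw [e, this.tsum_eq]
  refine mul_nonneg (by positivity) (Finset.sum_nonneg fun m _ => mul_nonneg (hC m) ?_)
  have : 0 ≤ R / (k : ℝ) ^ ν := by positivity
  have : 0 ≤ 1 - -R / (k : ℝ) ^ ν := by rw [neg_div]; linarith
  positivity

theorem mle_summable (ν : ℝ) (h0 : 0 < ν) (h1 : ν < 1) (n : ℕ) (R : ℝ) (hR : 0 ≤ R) :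
    Summable (fun j : ℕ => ((j + n).descFactorial n : ℝ) * mle ν (j + n) * R ^ j) := by
  obtain ⟨K, hK, hK2⟩ := ml_exists_K ν h0 R
  refine Summable.of_nonneg_of_le (fun j => ?_) (fun j => ?_)
    (mlA_summable ν h0 h1 n K hK R hR (hK2 K le_rfl))
  · have := mle_nonneg ν h0 (j + n)
    positivity
  · have := mle_le ν h0 K (j + n) hK
    gcongr

noncomputable def mlF (ν : ℝ) (n : ℕ) (x : ℝ) : ℝ :=
  ∑' j : ℕ, (-1 : ℝ) ^ (j + n) * (((j + n).descFactorial n : ℝ) * mle ν (j + n)) * x ^ j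

theorem mlF_nonneg (ν : ℝ) (h0 : 0 < ν) (h1 : ν < 1) (n : ℕ) (x : ℝ) (hx : 0 ≤ x) :
    0 ≤ (-1 : ℝ) ^ n * mlF ν n x := by
  have e : (-1 : ℝ) ^ n * mlF ν n x
      = ∑' j : ℕ, ((j + n).descFactorial n : ℝ) * mle ν (j + n) * (-x) ^ j := by
    rw [mlF, ← tsum_mul_left]
    refine tsum_congr fun j => ?_
    have : (-1 : ℝ) ^ n * (-1 : ℝ) ^ n = 1 := by rw [← mul_pow]; simp
    rw [pow_add, neg_pow x]
    linear_combination ((-1 : ℝ) ^ j * (((j + n).descFactorial n : ℝ) * mle ν (j + n)) * x ^ j) * this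
  rw [e]
  obtain ⟨K, hK, hK2⟩ := ml_exists_K ν h0 x
  have ht : Filter.Tendsto
      (fun k => ∑' j : ℕ, ((j + n).descFactorial n : ℝ) * mlA ν k (j + n) * (-x) ^ j)
      Filter.atTop
      (nhds (∑' j : ℕ, ((j + n).descFactorial n : ℝ) * mle ν (j + n) * (-x) ^ j)) := by
    refine tendsto_tsum_of_dominated_convergence
      (mlA_summable ν h0 h1 n K hK x hx (hK2 K le_rfl)) (fun j => ?_) ?_
    · exact ((mlA_tendsto ν h0 (j + n)).const_mul _).mul_const _
    · filter_upwards [Filter.eventually_ge_atTop K] with k hk j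
      have := mlA_anti ν h0 K k (j + n) hK hk
      have := mlA_nonneg ν h0 k (j + n)
      rw [norm_mul, norm_mul, norm_pow, norm_neg, Real.norm_of_nonneg hx,
        Real.norm_of_nonneg this, Real.norm_of_nonneg (Nat.cast_nonneg _)]
      gcongr
  refine ge_of_tendsto ht ?_
  filter_upwards [Filter.eventually_ge_atTop K] with k hk
  exact mlA_tsum_nonneg ν h0 h1 n k (by omega) x hx (hK2 k hk)

theorem ml_desc (j n : ℕ) :
    ((j + 1 + n).descFactorial n : ℝ) * (j + 1) = ((j + (n + 1)).descFactorial (n + 1) : ℝ) := by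
  rw [show j + (n + 1) = j + 1 + n by ring, Nat.descFactorial_succ, Nat.add_sub_cancel]
  push_cast
  ring

theorem mlF_hasDerivAt (ν : ℝ) (h0 : 0 < ν) (h1 : ν < 1) (n : ℕ) (x : ℝ) :
    HasDerivAt (mlF ν n) (mlF ν (n + 1) x) x := by
  set c : ℕ → ℝ := fun j => (-1 : ℝ) ^ (j + n) * (((j + n).descFactorial n : ℝ) * mle ν (j + n))
    with hc
  have hcn : ∀ j, ‖c j‖ = ((j + n).descFactorial n : ℝ) * mle ν (j + n) := fun j => by
    have := mle_nonneg ν h0 (j + n)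
    rw [hc]
    simp only [norm_mul, norm_pow, norm_neg, norm_one, one_pow, one_mul]
    rw [Real.norm_of_nonneg this, Real.norm_of_nonneg (Nat.cast_nonneg _)]
  set R : ℝ := |x| + 1 with hRdef
  have hR : 0 < R := by positivity
  have hu : Summable (fun j : ℕ => ‖c j‖ * (j * R ^ (j - 1))) := by
    rw [← summable_nat_add_iff 1]
    refine (mle_summable ν h0 h1 (n + 1) R hR.le).congr fun j => ?_
    rw [hcn, Nat.add_sub_cancel, ← ml_desc, show j + (n + 1) = j + 1 + n by ring]
    push_cast
    ring
  have hmem : ∀ y ∈ Metric.ball (0:ℝ) R, ∀ j : ℕ, ‖c j * (j * y ^ (j - 1))‖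
      ≤ ‖c j‖ * (j * R ^ (j - 1)) := by
    intro y hy j
    have : ‖y‖ ≤ R := by simpa using (mem_ball_zero_iff.1 hy).le
    rw [norm_mul (c j)]
    refine mul_le_mul_of_nonneg_left ?_ (norm_nonneg _)
    rw [norm_mul, norm_pow, Real.norm_of_nonneg (Nat.cast_nonneg j)]
    gcongr
  have hxm : x ∈ Metric.ball (0:ℝ) R := by
    rw [mem_ball_zero_iff, Real.norm_eq_abs]; linarith
  have main := hasDerivAt_tsum_of_isPreconnected (t := Metric.ball (0:ℝ) R)
    (g := fun j y => c j * y ^ j) (g' := fun j y => c j * (j * y ^ (j - 1))) (y := x) (y₀ := 0)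
    hu Metric.isOpen_ball (convex_ball (0:ℝ) R).isPreconnected
    (fun j y _ => (hasDerivAt_pow j y).const_mul (c j)) (fun j y hy => hmem y hy j)
    (Metric.mem_ball_self hR)
    (summable_of_ne_finset_zero (s := {0}) fun j hj => by
      simp at hj; simp [hj]) hxm
  have hs : Summable (fun j : ℕ => c j * (j * x ^ (j - 1))) :=
    Summable.of_norm_bounded hu (hmem x hxm)
  have e : mlF ν (n + 1) x = ∑' j : ℕ, c j * (j * x ^ (j - 1)) := by
    rw [hs.tsum_eq_zero_add, mlF]
    simp only [Nat.cast_zero, zero_mul, mul_zero, zero_add]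
    refine tsum_congr fun j => ?_
    rw [hc]
    simp only
    rw [Nat.add_sub_cancel, ← ml_desc, show j + (n + 1) = j + 1 + n by ring]
    push_cast
    ring
  rw [e]
  exact main

theorem mlF_zero (ν : ℝ) : (fun x : ℝ => mittagLeffler ν (-x)) = mlF ν 0 := by
  funext x
  rw [mittagLeffler, mlF]
  refine tsum_congr fun j => ?_
  rw [neg_pow, mle]
  simp
  ring

theorem ml_iteratedDeriv (ν : ℝ) (h0 : 0 < ν) (h1 : ν < 1) (n : ℕ) :
    iteratedDeriv n (mlF ν 0) = mlF ν n := by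
  induction n with
  | zero => simp
  | succ n ih =>
    rw [iteratedDeriv_succ, ih]
    funext x
    exact (mlF_hasDerivAt ν h0 h1 n x).deriv

/-- Pollard: For `ν ∈ (0,1)`, `x ↦ E_ν(−x)` is completely monotone
on `(0,∞)`: infinitely differentiable with `(−1)^n (dⁿ/dxⁿ) E_ν(−x) ≥ 0` for all
`n ≥ 0`, `x > 0`. -/
theorem mittagLeffler_completely_monotone (ν : ℝ) (hν : ν ∈ Set.Ioo (0:ℝ) 1) :
    ContDiffOn ℝ (⊤ : ℕ∞) (fun x : ℝ => mittagLeffler ν (-x)) (Set.Ioi 0) ∧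
    ∀ n : ℕ, ∀ x : ℝ, 0 < x →
      0 ≤ (-1 : ℝ) ^ n * iteratedDeriv n (fun x : ℝ => mittagLeffler ν (-x)) x := by
  obtain ⟨h0, h1⟩ := hν
  rw [mlF_zero]
  refine ⟨ContDiff.contDiffOn (contDiff_of_differentiable_iteratedDeriv fun m _ => ?_), ?_⟩
  · rw [ml_iteratedDeriv ν h0 h1]
    exact fun x => (mlF_hasDerivAt ν h0 h1 m x).differentiableAt
  · intro n x hx
    rw [ml_iteratedDeriv ν h0 h1]
    exact mlF_nonneg ν h0 h1 n x hx.le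
end

section
/- The composition of two Bernstein functions is a Bernstein function: if f, g : ℝ → ℝ are infinitely differentiable on (0,∞), g is a Bernstein function on (0,∞) with g(x) > 0 for all x > 0, and f is a Bernstein function on (0,∞), then f ∘ g is a Bernstein function on (0,∞), i.e. (f∘g)(x) ≥ 0 for all x > 0 and (−1)^{n−1} · (dⁿ/dxⁿ)(f∘g)(x) ≥ 0 for every integer n ≥ 1 and every x > 0. -/
open Real Set

/-- The composition of two Bernstein functions is a Bernstein function:
if `g` is Bernstein on `(0,∞)` with `g > 0` there, and `f` is Bernstein on `(0,∞)`,
then `f ∘ g` is Bernstein on `(0,∞)`. -/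
theorem bernstein_comp_bernstein (f g : ℝ → ℝ)
    (hf_smooth : ContDiffOn ℝ (⊤ : ℕ∞) f (Set.Ioi 0))
    (hg_smooth : ContDiffOn ℝ (⊤ : ℕ∞) g (Set.Ioi 0))
    (hg_pos : ∀ x : ℝ, 0 < x → 0 < g x)
    (hg_bern : ∀ n : ℕ, 1 ≤ n → ∀ x : ℝ, 0 < x →
      0 ≤ (-1 : ℝ) ^ (n - 1) * iteratedDeriv n g x)
    (hf_nonneg : ∀ x : ℝ, 0 < x → 0 ≤ f x)
    (hf_bern : ∀ n : ℕ, 1 ≤ n → ∀ x : ℝ, 0 < x →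
      0 ≤ (-1 : ℝ) ^ (n - 1) * iteratedDeriv n f x) :
    ContDiffOn ℝ (⊤ : ℕ∞) (f ∘ g) (Set.Ioi 0) ∧
    (∀ x : ℝ, 0 < x → 0 ≤ (f ∘ g) x) ∧
    ∀ n : ℕ, 1 ≤ n → ∀ x : ℝ, 0 < x →
      0 ≤ (-1 : ℝ) ^ (n - 1) * iteratedDeriv n (f ∘ g) x := by
  have hmaps : MapsTo g (Ioi 0) (Ioi 0) := fun x hx => hg_pos x hx
  refine ⟨hf_smooth.comp hg_smooth hmaps, fun x hx => hf_nonneg _ (hg_pos x hx), ?_⟩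
  intro n hn x hx
  have hgx := hg_pos x hx
  have hfa : ContDiffAt ℝ n f (g x) :=
    (hf_smooth.contDiffAt (Ioi_mem_nhds hgx)).of_le (by exact_mod_cast le_top)
  have hga : ContDiffAt ℝ n g x :=
    (hg_smooth.contDiffAt (Ioi_mem_nhds hx)).of_le (by exact_mod_cast le_top)
  rw [iteratedDeriv_comp_eq_sum_orderedFinpartition hfa hga le_rfl, Finset.mul_sum]
  refine Finset.sum_nonneg fun c _ => ?_
  have hlen : 1 ≤ c.length := c.length_pos hn
  have key : ∀ m : ℕ, 1 ≤ m → (-1 : ℝ) ^ m = -(-1 : ℝ) ^ (m - 1) := by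
    intro m hm
    obtain ⟨k, rfl⟩ := Nat.exists_eq_add_of_le' hm
    simp [pow_succ]
  have hsum : ∑ j, c.partSize j = n := by
    have h := Fintype.card_congr c.equivSigma
    simpa using h
  have hprod : ∏ j, (-1 : ℝ) ^ (c.partSize j - 1) = (-1 : ℝ) ^ c.length * (-1 : ℝ) ^ n := by
    have h1 : ∀ j, (-1 : ℝ) ^ (c.partSize j - 1) = (-1) * (-1 : ℝ) ^ (c.partSize j) := by
      intro j
      rw [key _ (c.partSize_pos j)]
      ring
    simp_rw [h1]
    rw [Finset.prod_mul_distrib, Finset.prod_pow_eq_pow_sum, hsum]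
    simp
  have hsign : (-1 : ℝ) ^ (n - 1) =
      (-1 : ℝ) ^ (c.length - 1) * ∏ j, (-1 : ℝ) ^ (c.partSize j - 1) := by
    have hsq : (-1 : ℝ) ^ (c.length - 1) * (-1 : ℝ) ^ (c.length - 1) = 1 := by
      rw [← mul_pow]
      simp
    rw [hprod, key _ hlen, key _ hn]
    linear_combination (-(-1 : ℝ) ^ (n - 1)) * hsq
  have hfin := mul_nonneg (hf_bern c.length hlen (g x) hgx)
    (Finset.prod_nonneg fun j (_ : j ∈ Finset.univ) =>
      hg_bern (c.partSize j) (c.partSize_pos j) x hx)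
  rw [Finset.prod_mul_distrib] at hfin
  rw [hsign]
  refine hfin.trans_eq ?_
  ring
end

section
/- The composition of a completely monotone function with a Bernstein function is completely monotone: if f : ℝ → ℝ is completely monotone on (0,∞) and g : ℝ → ℝ is a Bernstein function on (0,∞) with g(x) > 0 for all x > 0, then f ∘ g is completely monotone on (0,∞), i.e. (−1)^n · (dⁿ/dxⁿ)(f∘g)(x) ≥ 0 for every integer n ≥ 0 and every x > 0. -/
open Real Set

theorem cm_comp_aux (g : ℝ → ℝ)
    (hg_smooth : ContDiffOn ℝ (⊤ : ℕ∞) g (Set.Ioi 0))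
    (hg_pos : ∀ x : ℝ, 0 < x → 0 < g x)
    (hg_bern : ∀ n : ℕ, 1 ≤ n → ∀ x : ℝ, 0 < x →
      0 ≤ (-1 : ℝ) ^ (n - 1) * iteratedDeriv n g x) (n : ℕ) :
    ∀ f : ℝ → ℝ, ContDiffOn ℝ (⊤ : ℕ∞) f (Set.Ioi 0) →
    (∀ n : ℕ, ∀ x : ℝ, 0 < x → 0 ≤ (-1 : ℝ) ^ n * iteratedDeriv n f x) →
    ∀ x : ℝ, 0 < x → 0 ≤ (-1 : ℝ) ^ n * iteratedDeriv n (f ∘ g) x := by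
  induction n using Nat.strong_induction_on with
  | _ n ih =>
  intro f hf hcm x hx
  cases n with
  | zero => simpa using hcm 0 (g x) (hg_pos x hx)
  | succ n =>
    have hf' : ContDiffOn ℝ (⊤ : ℕ∞) (deriv f) (Set.Ioi 0) :=
      hf.deriv_of_isOpen isOpen_Ioi (by simp)
    have hg' : ContDiffOn ℝ (⊤ : ℕ∞) (deriv g) (Set.Ioi 0) :=
      hg_smooth.deriv_of_isOpen isOpen_Ioi (by simp)
    have hfg' : ContDiffOn ℝ (⊤ : ℕ∞) (deriv f ∘ g) (Set.Ioi 0) :=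
      hf'.comp hg_smooth (fun y hy => hg_pos y hy)
    have heq : Set.EqOn (deriv (f ∘ g)) ((deriv f ∘ g) * deriv g) (Set.Ioi 0) := by
      intro y hy
      have h1 : DifferentiableAt ℝ f (g y) :=
        (hf.contDiffAt (Ioi_mem_nhds (hg_pos y hy))).differentiableAt (by simp)
      have h2 : DifferentiableAt ℝ g y :=
        (hg_smooth.contDiffAt (Ioi_mem_nhds hy)).differentiableAt (by simp)
      simpa using deriv_comp y h1 h2
    have hA : ContDiffAt ℝ n (deriv f ∘ g) x :=
      (hfg'.contDiffAt (Ioi_mem_nhds hx)).of_le (by exact_mod_cast le_top)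
    have hB : ContDiffAt ℝ n (deriv g) x :=
      (hg'.contDiffAt (Ioi_mem_nhds hx)).of_le (by exact_mod_cast le_top)
    rw [iteratedDeriv_succ', heq.iteratedDeriv_of_isOpen isOpen_Ioi n hx,
      iteratedDeriv_mul hA hB, Finset.mul_sum]
    refine Finset.sum_nonneg fun i hi => ?_
    have hi' : i < n + 1 := Finset.mem_range.mp hi
    have h1 := ih i hi' (-deriv f) hf'.neg (fun m y hy => by
      have := hcm (m + 1) y hy
      rw [iteratedDeriv_succ'] at this
      rw [iteratedDeriv_neg]
      rw [pow_succ] at this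
      linarith) x hx
    have h2 := hg_bern (n - i + 1) (by omega) x hx
    rw [iteratedDeriv_succ'] at h2
    have e : (-deriv f) ∘ g = -(deriv f ∘ g) := rfl
    rw [e, iteratedDeriv_neg] at h1
    have h3 := mul_nonneg (Nat.cast_nonneg (α := ℝ) (n.choose i)) (mul_nonneg h1 h2)
    have hp : (-1 : ℝ) ^ (n + 1) = -((-1) ^ i * (-1) ^ (n - i)) := by
      rw [← pow_add, show i + (n - i) = n by omega, pow_succ]; ring
    rw [hp]
    simp only [Nat.add_sub_cancel] at h3
    convert h3 using 1
    ring

/-- The composition of a completely monotone function with a Bernstein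
function is completely monotone: if `f` is completely monotone on `(0,∞)` and `g` is
Bernstein on `(0,∞)` with `g > 0` there, then `f ∘ g` is completely monotone on `(0,∞)`. -/
theorem completelyMonotone_comp_bernstein (f g : ℝ → ℝ)
    (hf_smooth : ContDiffOn ℝ (⊤ : ℕ∞) f (Set.Ioi 0))
    (hf_cm : ∀ n : ℕ, ∀ x : ℝ, 0 < x → 0 ≤ (-1 : ℝ) ^ n * iteratedDeriv n f x)
    (hg_smooth : ContDiffOn ℝ (⊤ : ℕ∞) g (Set.Ioi 0))
    (hg_nonneg : ∀ x : ℝ, 0 < x → 0 ≤ g x)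
    (hg_pos : ∀ x : ℝ, 0 < x → 0 < g x)
    (hg_bern : ∀ n : ℕ, 1 ≤ n → ∀ x : ℝ, 0 < x →
      0 ≤ (-1 : ℝ) ^ (n - 1) * iteratedDeriv n g x) :
    ContDiffOn ℝ (⊤ : ℕ∞) (f ∘ g) (Set.Ioi 0) ∧
    ∀ n : ℕ, ∀ x : ℝ, 0 < x → 0 ≤ (-1 : ℝ) ^ n * iteratedDeriv n (f ∘ g) x := by
  exact ⟨hf_smooth.comp hg_smooth (fun y hy => hg_pos y hy),
    fun n => cm_comp_aux g hg_smooth hg_pos hg_bern n f hf_smooth hf_cm⟩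
end
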